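/- arXiv:2211.09327 — 9 statements merged into one kernel-verified Lean document; each statement's English description precedes it below -/
import Mathlib

section
/- For the path graph P_n on n vertices, the vertex-edge dominant edge metric dimension satisfies: γ_emd(P_n) = 1 if n = 2 or n = 3; γ_emd(P_n) = 2 if n = 4 or n = 5; and γ_emd(P_n) = ⌊(n+2)/4⌋ if n ≥ 6. -/
/-!
Number the vertices of `P_n` as `0, …, n - 1` and let edge `i` join `i` and `i + 1`.

A vertex `w` ve-dominates edge `i` exactly when `w - 2 ≤ i ≤ w + 1`, so it dominates at most four
of the `n - 1` edges, and a ve-dominating set has at least `⌈(n - 1) / 4⌉ = ⌊(n + 2) / 4⌋`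
elements (`card_ge_of_dominating`).

The vertex `w` fails to separate distinct edges `i` and `j` only when `i + j = 2 w - 1`
(`edgeDist_path_eq_iff`). This determines `w`, so any two distinct vertices resolve all the edges
(`resolving_of_two`). Hence for `n ≥ 6`, where at least two vertices are needed anyway, only
domination matters, and the vertices `2, 6, 10, …`, the last one capped at `n - 1`, attain the
bound. An end vertex alone resolves the edges but dominates only two of them, whereas an inner
vertex does not separate its own two edges; this settles `n ≤ 5`.
-/

open SimpleGraph

/-- Distance from a vertex `w` to an edge `e = xy`: `min (d w x) (d w y)`. -/
noncomputable def edgeDist {V : Type*} (G : SimpleGraph V) (w : V) (e : Sym2 V) : ℕ :=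
  Sym2.lift ⟨fun x y => min (G.dist w x) (G.dist w y), fun _ _ => min_comm _ _⟩ e

/-- `A` is an edge resolving set: any two distinct edges are distinguished by some vertex of `A`. -/
def IsEdgeResolvingSet {V : Type*} (G : SimpleGraph V) (A : Set V) : Prop :=
  ∀ e ∈ G.edgeSet, ∀ f ∈ G.edgeSet, e ≠ f → ∃ w ∈ A, edgeDist G w e ≠ edgeDist G w f

/-- A vertex `w` ve-dominates an edge `e = xy` if `w ∈ {x, y}` or `w` is adjacent to `x` or `y`. -/
def VEDominates {V : Type*} (G : SimpleGraph V) (w : V) (e : Sym2 V) : Prop :=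
  ∃ x y, e = s(x, y) ∧ (w = x ∨ w = y ∨ G.Adj w x ∨ G.Adj w y)

/-- `T` is a vertex-edge dominating set: every edge is ve-dominated by some vertex of `T`. -/
def IsVEDominatingSet {V : Type*} (G : SimpleGraph V) (T : Set V) : Prop :=
  ∀ e ∈ G.edgeSet, ∃ w ∈ T, VEDominates G w e

/-- The vertex-edge domination number `γ_ve`. -/
noncomputable def gammaVe {V : Type*} (G : SimpleGraph V) [Fintype V] : ℕ :=
  sInf {k | ∃ T : Finset V, T.card = k ∧ IsVEDominatingSet G ↑T}

/-- The edge metric dimension `β_e`. -/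
noncomputable def betaE {V : Type*} (G : SimpleGraph V) [Fintype V] : ℕ :=
  sInf {k | ∃ A : Finset V, A.card = k ∧ IsEdgeResolvingSet G ↑A}

/-- The vertex-edge dominant edge metric dimension `γ_emd`. -/
noncomputable def gammaEmd {V : Type*} (G : SimpleGraph V) [Fintype V] : ℕ :=
  sInf {k | ∃ S : Finset V, S.card = k ∧ IsVEDominatingSet G ↑S ∧ IsEdgeResolvingSet G ↑S}

/-- `B` is a (vertex) resolving set. -/
def IsResolvingSet {V : Type*} (G : SimpleGraph V) (B : Set V) : Prop :=
  ∀ u v : V, u ≠ v → ∃ w ∈ B, G.dist w u ≠ G.dist w v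

/-- `S` is a dominating set. -/
def IsDominatingSet {V : Type*} (G : SimpleGraph V) (S : Set V) : Prop :=
  ∀ v ∉ S, ∃ u ∈ S, G.Adj u v

/-- The metric dimension `β`. -/
noncomputable def metricDim {V : Type*} (G : SimpleGraph V) [Fintype V] : ℕ :=
  sInf {k | ∃ B : Finset V, B.card = k ∧ IsResolvingSet G ↑B}

/-- The dominant metric dimension `γ_md`. -/
noncomputable def gammaMd {V : Type*} (G : SimpleGraph V) [Fintype V] : ℕ :=
  sInf {k | ∃ D : Finset V, D.card = k ∧ IsDominatingSet G ↑D ∧ IsResolvingSet G ↑D}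

/-- The wheel graph `W_{1,n}`: a hub (`none`) joined to every vertex of a cycle on `Fin n`. -/
def wheelGraph (n : ℕ) : SimpleGraph (Option (Fin n)) :=
  SimpleGraph.fromRel (fun u v =>
    (u = none ∧ v ≠ none) ∨
    (∃ i j : Fin n, u = some i ∧ v = some j ∧ (i.val + 1) % n = j.val))

/-- The fan graph `F_{1,n}`: a hub (`none`) joined to every vertex of a path on `Fin n`. -/
def fanGraph (n : ℕ) : SimpleGraph (Option (Fin n)) :=
  SimpleGraph.fromRel (fun u v =>
    (u = none ∧ v ≠ none) ∨
    (∃ i j : Fin n, u = some i ∧ v = some j ∧ i.val + 1 = j.val))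

/-- The star graph `S_{1,n}`: a hub (`none`) joined to `n` leaves. -/
def starGraph (n : ℕ) : SimpleGraph (Option (Fin n)) :=
  SimpleGraph.fromRel (fun u v => u = none ∧ v ≠ none)

lemma dist_path_le {n : ℕ} (a : Fin n) (k : ℕ) (h : a.val + k < n) :
    (pathGraph n).dist a ⟨a.val + k, h⟩ ≤ k := by
  induction k with
  | zero => simp
  | succ k ih =>
    have hk : a.val + k < n := by omega
    have hadj : (pathGraph n).Adj ⟨a.val + k, hk⟩ ⟨a.val + (k + 1), h⟩ := by
      rw [pathGraph_adj]; left; simp; omega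
    have h1 := ((pathGraph_preconnected n) a ⟨a.val + k, hk⟩).dist_triangle_left
      ⟨a.val + (k + 1), h⟩
    have h2 := SimpleGraph.dist_eq_one_iff_adj.mpr hadj
    have h3 := ih hk
    omega

lemma path_walk_length {n : ℕ} {a b : Fin n} (p : (pathGraph n).Walk a b) :
    b.val ≤ a.val + p.length ∧ a.val ≤ b.val + p.length := by
  induction p with
  | nil => simp
  | cons h p ih =>
    rw [pathGraph_adj] at h
    rw [SimpleGraph.Walk.length_cons]
    omega

lemma dist_path {n : ℕ} (a b : Fin n) :
    (pathGraph n).dist a b = (a.val - b.val) + (b.val - a.val) := by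
  obtain ⟨p, hp⟩ := ((pathGraph_preconnected n) a b).exists_walk_length_eq_dist
  have h1 := path_walk_length p
  rcases le_total a.val b.val with h | h
  · have h2 := dist_path_le a (b.val - a.val) (by omega)
    have h3 : (⟨a.val + (b.val - a.val), by omega⟩ : Fin n) = b := by ext; simp; omega
    rw [h3] at h2
    omega
  · have h2 := dist_path_le b (a.val - b.val) (by omega)
    have h3 : (⟨b.val + (a.val - b.val), by omega⟩ : Fin n) = a := by ext; simp; omega
    rw [h3, SimpleGraph.dist_comm] at h2
    omega

/-- The edge of the path joining the vertices `i` and `i + 1`. -/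
def pathEdge {n : ℕ} (i : ℕ) (h : i + 1 < n) : Sym2 (Fin n) :=
  s(⟨i, by omega⟩, ⟨i + 1, h⟩)

lemma mem_edgeSet_path {n : ℕ} (e : Sym2 (Fin n)) :
    e ∈ (pathGraph n).edgeSet ↔ ∃ i, ∃ h : i + 1 < n, e = pathEdge i h := by
  constructor
  · induction e with
    | h x y =>
      intro h
      rw [SimpleGraph.mem_edgeSet, pathGraph_adj] at h
      rcases h with h | h
      · refine ⟨x.val, by omega, ?_⟩
        exact Sym2.eq_iff.mpr (Or.inl ⟨rfl, Fin.ext h.symm⟩)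
      · refine ⟨y.val, by omega, ?_⟩
        exact Sym2.eq_iff.mpr (Or.inr ⟨Fin.ext h.symm, rfl⟩)
  · rintro ⟨i, h, rfl⟩
    rw [pathEdge, SimpleGraph.mem_edgeSet, pathGraph_adj]
    simp

lemma pathEdge_inj {n i j : ℕ} (hi : i + 1 < n) (hj : j + 1 < n) :
    pathEdge i hi = pathEdge j hj ↔ i = j := by
  simp only [pathEdge, Sym2.eq_iff, Fin.mk.injEq]
  omega

/-- A vertex is equidistant from two edges of the path exactly when these coincide or lie
symmetrically on either side of it. -/
lemma edgeDist_path_eq_iff {n i j : ℕ} (w : Fin n) (hi : i + 1 < n) (hj : j + 1 < n) :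
    edgeDist (pathGraph n) w (pathEdge i hi) = edgeDist (pathGraph n) w (pathEdge j hj) ↔
      i = j ∨ i + j + 1 = 2 * w.val := by
  simp only [edgeDist, pathEdge, Sym2.lift_mk, dist_path]
  omega

lemma veDominates_path {n i : ℕ} (w : Fin n) (hi : i + 1 < n) :
    VEDominates (pathGraph n) w (pathEdge i hi) ↔ w.val ≤ i + 2 ∧ i ≤ w.val + 1 := by
  constructor
  · rintro ⟨x, y, he, h⟩
    simp only [pathEdge, Sym2.eq_iff, Fin.ext_iff] at he
    simp only [pathGraph_adj, Fin.ext_iff] at h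
    omega
  · intro h
    refine ⟨_, _, rfl, ?_⟩
    simp only [pathGraph_adj, Fin.ext_iff]
    omega

lemma dominating_path {n : ℕ} (S : Set (Fin n)) :
    IsVEDominatingSet (pathGraph n) S ↔
      ∀ i, i + 1 < n → ∃ w ∈ S, w.val ≤ i + 2 ∧ i ≤ w.val + 1 := by
  constructor
  · intro h i hi
    obtain ⟨w, hw, hd⟩ := h _ ((mem_edgeSet_path _).mpr ⟨i, hi, rfl⟩)
    exact ⟨w, hw, (veDominates_path w hi).mp hd⟩
  · intro h e he
    obtain ⟨i, hi, rfl⟩ := (mem_edgeSet_path e).mp he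
    obtain ⟨w, hw, hd⟩ := h i hi
    exact ⟨w, hw, (veDominates_path w hi).mpr hd⟩

lemma resolving_path {n : ℕ} (S : Set (Fin n)) :
    IsEdgeResolvingSet (pathGraph n) S ↔
      ∀ i j, i + 1 < n → j + 1 < n → i ≠ j → ∃ w ∈ S, i + j + 1 ≠ 2 * w.val := by
  constructor
  · intro h i j hi hj hij
    obtain ⟨w, hw, hd⟩ := h _ ((mem_edgeSet_path _).mpr ⟨i, hi, rfl⟩)
      _ ((mem_edgeSet_path _).mpr ⟨j, hj, rfl⟩) (by rwa [Ne, pathEdge_inj])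
    rw [Ne, edgeDist_path_eq_iff] at hd
    exact ⟨w, hw, by tauto⟩
  · intro h e he f hf hef
    obtain ⟨i, hi, rfl⟩ := (mem_edgeSet_path e).mp he
    obtain ⟨j, hj, rfl⟩ := (mem_edgeSet_path f).mp hf
    rw [Ne, pathEdge_inj] at hef
    obtain ⟨w, hw, hd⟩ := h i j hi hj hef
    refine ⟨w, hw, ?_⟩
    rw [Ne, edgeDist_path_eq_iff]
    tauto

lemma resolving_of_two {n : ℕ} {S : Finset (Fin n)} (h : 1 < S.card) :
    IsEdgeResolvingSet (pathGraph n) (S : Set (Fin n)) := by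
  rw [resolving_path]
  intro i j _ _ _
  obtain ⟨a, ha, b, hb, hab⟩ := Finset.one_lt_card.mp h
  have hab' : a.val ≠ b.val := fun hh => hab (Fin.ext hh)
  by_cases hw : i + j + 1 = 2 * a.val
  · exact ⟨b, by simpa using hb, by omega⟩
  · exact ⟨a, by simpa using ha, hw⟩

/-- Each vertex ve-dominates at most four of the `n - 1` edges. -/
lemma card_ge_of_dominating {n : ℕ} {S : Finset (Fin n)}
    (h : IsVEDominatingSet (pathGraph n) (S : Set (Fin n))) : (n + 2) / 4 ≤ S.card := by
  rw [dominating_path] at h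
  have hsub : Finset.range (n - 1) ⊆
      S.biUnion fun w => Finset.Icc (w.val - 2) (w.val + 1) := by
    intro i hi
    rw [Finset.mem_range] at hi
    obtain ⟨w, hw, h1⟩ := h i (by omega)
    rw [Finset.mem_biUnion]
    exact ⟨w, by simpa using hw, by rw [Finset.mem_Icc]; omega⟩
  have h1 := Finset.card_le_card hsub
  have h2 : (S.biUnion fun w => Finset.Icc (w.val - 2) (w.val + 1)).card ≤ S.card * 4 :=
    Finset.card_biUnion_le_card_mul _ _ _ fun w _ => by rw [Nat.card_Icc]; omega
  rw [Finset.card_range] at h1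
  omega

lemma two_le_card {n : ℕ} (hn : 4 ≤ n) {S : Finset (Fin n)}
    (hd : IsVEDominatingSet (pathGraph n) (S : Set (Fin n)))
    (hr : IsEdgeResolvingSet (pathGraph n) (S : Set (Fin n))) : 2 ≤ S.card := by
  have h1 := card_ge_of_dominating hd
  by_contra hc
  obtain ⟨w, rfl⟩ := Finset.card_eq_one.mp (show S.card = 1 by omega)
  rw [dominating_path] at hd
  rw [resolving_path] at hr
  simp only [Finset.coe_singleton, Set.mem_singleton_iff, exists_eq_left] at hd hr
  have h2 := hd 0 (by omega)
  have h3 := hd (n - 2) (by omega)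
  -- Domination of the first and last edges makes `w` an inner vertex; the two edges at `w` are
  -- then equidistant from it.
  exact hr (w.val - 1) w.val (by omega) (by omega) (by omega) (by omega)

lemma gammaEmd_eq {n k : ℕ}
    (hex : ∃ S : Finset (Fin n), S.card = k ∧ IsVEDominatingSet (pathGraph n) (S : Set (Fin n)) ∧
      IsEdgeResolvingSet (pathGraph n) (S : Set (Fin n)))
    (hlb : ∀ S : Finset (Fin n), IsVEDominatingSet (pathGraph n) (S : Set (Fin n)) →
      IsEdgeResolvingSet (pathGraph n) (S : Set (Fin n)) → k ≤ S.card) :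
    gammaEmd (pathGraph n) = k := by
  refine IsLeast.csInf_eq ⟨hex, ?_⟩
  rintro _ ⟨S, rfl, hd, hr⟩
  exact hlb S hd hr

lemma exists_dominating {n : ℕ} (hn : 2 ≤ n) :
    ∃ S : Finset (Fin n), S.card = (n + 2) / 4 ∧
      IsVEDominatingSet (pathGraph n) (S : Set (Fin n)) := by
  -- The vertex `4 j + 2` dominates the edges `4 j, …, 4 j + 3`. For `n ≡ 2 [MOD 4]` the last of
  -- these vertices would be `n`, whence the minimum.
  let f : ℕ → Fin n := fun j => ⟨min (4 * j + 2) (n - 1), by omega⟩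
  refine ⟨(Finset.range ((n + 2) / 4)).image f, ?_, ?_⟩
  · rw [Finset.card_image_of_injOn, Finset.card_range]
    intro a ha b hb hab
    simp only [Finset.coe_range, Set.mem_Iio] at ha hb
    simp only [f, Fin.mk.injEq] at hab
    omega
  · rw [dominating_path]
    intro i hi
    refine ⟨f (i / 4), ?_, ?_⟩
    · rw [Finset.mem_coe]
      exact Finset.mem_image_of_mem f (Finset.mem_range.mpr (by omega))
    · simp only [f]
      omega

/-- The vertex-edge dominant edge metric dimension of the path graph `P_n`. -/
theorem stmt_0 (n : ℕ) :
    ((n = 2 ∨ n = 3) → gammaEmd (pathGraph n) = 1) ∧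
    ((n = 4 ∨ n = 5) → gammaEmd (pathGraph n) = 2) ∧
    (6 ≤ n → gammaEmd (pathGraph n) = (n + 2) / 4) := by
  refine ⟨fun hn => ?_, fun hn => ?_, fun hn => ?_⟩
  · refine gammaEmd_eq ⟨{⟨0, by omega⟩}, Finset.card_singleton _, ?_, ?_⟩ fun S hd _ => ?_
    · rw [dominating_path]
      intro i hi
      exact ⟨⟨0, by omega⟩, by simp, by simp, by simp; omega⟩
    · rw [resolving_path]
      intro i j hi hj _
      exact ⟨⟨0, by omega⟩, by simp, by simp⟩
    · have := card_ge_of_dominating hd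
      omega
  · refine gammaEmd_eq ⟨{⟨0, by omega⟩, ⟨2, by omega⟩}, ?_, ?_, ?_⟩
      fun S => two_le_card (by omega)
    · exact Finset.card_pair (by simp)
    · rw [dominating_path]
      intro i hi
      exact ⟨⟨2, by omega⟩, by simp, by simp, by simp; omega⟩
    · apply resolving_of_two
      rw [Finset.card_pair (by simp)]
      omega
  · obtain ⟨S, hS, hd⟩ := exists_dominating (n := n) (by omega)
    exact gammaEmd_eq ⟨S, hS, hd, resolving_of_two (by omega)⟩
      fun T hT _ => card_ge_of_dominating hT
end

section
/- For every n ≥ 2, the complete graph K_n satisfies γ_emd(K_n) = n − 1. -/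
/-!
In `K_n` the distance from `w` to an edge `e` is `0` if `w ∈ e` and `1` otherwise, so a set resolves
two edges exactly when it meets their symmetric difference.

Lower bound: a vertex-edge dominating set `S` contains some vertex `c`. If two vertices `a ≠ b` lay
outside `S`, the edges `ac` and `bc` would not be resolved, as their symmetric difference is
`{a, b}`. Hence `S` misses at most one vertex.

Upper bound: the complement of a single vertex works, because two distinct edges have at least two
vertices in their symmetric difference.
-/

open SimpleGraph

lemma edgeDist_top {V : Type*} [DecidableEq V] (w x y : V) :
    edgeDist (⊤ : SimpleGraph V) w s(x, y) = if w = x ∨ w = y then 0 else 1 := by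
  simp only [edgeDist, Sym2.lift_mk, SimpleGraph.dist_top]
  split_ifs <;> simp_all

lemma card_ge_of_emd {n : ℕ} (hn : 2 ≤ n) (S : Finset (Fin n))
    (hd : IsVEDominatingSet (⊤ : SimpleGraph (Fin n)) ↑S)
    (hr : IsEdgeResolvingSet (⊤ : SimpleGraph (Fin n)) ↑S) : n - 1 ≤ S.card := by
  obtain ⟨c, hc, -⟩ := hd s(⟨0, by omega⟩, ⟨1, by omega⟩) (by simp)
  by_contra! hlt
  have hcompl : 1 < Sᶜ.card := by
    rw [Finset.card_compl, Fintype.card_fin]; omega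
  obtain ⟨a, ha, b, hb, hab⟩ := Finset.one_lt_card.mp hcompl
  rw [Finset.mem_compl] at ha hb
  have hc' : c ∈ S := by simpa using hc
  have hac : a ≠ c := fun h => ha (h ▸ hc')
  have hbc : b ≠ c := fun h => hb (h ▸ hc')
  obtain ⟨w, hw, hne⟩ := hr s(a, c) (by simpa using hac) s(b, c) (by simpa using hbc)
    (by simp [hab, hac])
  have hw' : w ∈ S := by simpa using hw
  have hwa : w ≠ a := fun h => ha (h ▸ hw')
  have hwb : w ≠ b := fun h => hb (h ▸ hw')
  simp [edgeDist_top, hwa, hwb] at hne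

lemma isVEDominatingSet_top {V : Type*} {S : Set V} (hS : S.Nonempty) :
    IsVEDominatingSet (⊤ : SimpleGraph V) S := by
  obtain ⟨w, hw⟩ := hS
  intro e _
  induction e with
  | _ x y =>
    refine ⟨w, hw, x, y, rfl, ?_⟩
    simp only [SimpleGraph.top_adj]
    tauto

lemma isEdgeResolvingSet_top_compl_singleton {V : Type*} (v : V) :
    IsEdgeResolvingSet (⊤ : SimpleGraph V) {v}ᶜ := by
  classical
  intro e he f hf hef
  induction e with
  | _ a b =>
  induction f with
  | _ c d =>
    simp only [SimpleGraph.mem_edgeSet, SimpleGraph.top_adj] at he hf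
    by_contra! h
    have key (w : V) : w = v ∨ ((w = a ∨ w = b) ↔ (w = c ∨ w = d)) := by
      by_cases hw : w = v
      · exact Or.inl hw
      · have := h w hw
        rw [edgeDist_top, edgeDist_top] at this
        grind
    have ha := key a
    have hb := key b
    have hc := key c
    have hd := key d
    apply hef
    rw [Sym2.eq_iff]
    grind

/-- `γ_emd(K_n) = n - 1` for `n ≥ 2`. -/
theorem stmt_2 (n : ℕ) (hn : 2 ≤ n) :
    gammaEmd (⊤ : SimpleGraph (Fin n)) = n - 1 := by
  refine IsLeast.csInf_eq ⟨⟨{⟨0, by omega⟩}ᶜ, ?_, ?_, ?_⟩, ?_⟩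
  · simp [Finset.card_compl]
  · exact isVEDominatingSet_top ⟨⟨1, by omega⟩, by simp⟩
  · rw [Finset.coe_compl, Finset.coe_singleton]
    exact isEdgeResolvingSet_top_compl_singleton _
  · rintro k ⟨S, rfl, hd, hr⟩
    exact card_ge_of_emd hn S hd hr
end

section
/- For all n, m ≥ 2, the complete bipartite graph K_{n,m} satisfies γ_emd(K_{n,m}) = n + m − 2. -/
/-!
In a complete bipartite graph every vertex is equal or adjacent to an endpoint of every edge, so the
distance from a vertex to an edge is `0` if the vertex lies on the edge and `1` otherwise
(`edgeDist_completeBipartite`). In particular every nonempty set is vertex-edge dominating.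

Two edges sharing one endpoint are therefore distinguished only by their two other endpoints, so an
edge resolving set misses at most one vertex of each part; this gives the bound
`n + m - 2 ≤ γ_emd`. Conversely, deleting one vertex from each part leaves a resolving set:
distinct edges have distinct endpoints in some part, and at least one of these was kept.
-/

open SimpleGraph

/-- A vertex is at distance `0` from the edges containing it and at distance `1` from all others. -/
lemma edgeDist_completeBipartite {α β : Type*} (w : α ⊕ β) (a : α) (b : β)
    [Decidable (w = Sum.inl a ∨ w = Sum.inr b)] :
    edgeDist (completeBipartiteGraph α β) w s(Sum.inl a, Sum.inr b) =
      if w = Sum.inl a ∨ w = Sum.inr b then 0 else 1 := by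
  have hadj : ∀ (c : α) (d : β),
      (completeBipartiteGraph α β).Adj (Sum.inl c) (Sum.inr d) := by simp
  change min (SimpleGraph.dist _ w (Sum.inl a)) (SimpleGraph.dist _ w (Sum.inr b)) = _
  split_ifs with h
  · rcases h with rfl | rfl <;> simp
  · push Not at h
    rcases w with c | d
    · have h1 := SimpleGraph.dist_eq_one_iff_adj.mpr (hadj c b)
      have h2 := ((hadj c b).reachable.trans (hadj a b).symm.reachable).pos_dist_of_ne h.1
      omega
    · have h1 := SimpleGraph.dist_eq_one_iff_adj.mpr (hadj a d).symm
      have h2 := ((hadj a d).symm.reachable.trans (hadj a b).reachable).pos_dist_of_ne h.2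
      omega

lemma exists_of_mem_edgeSet_completeBipartite {α β : Type*} {e : Sym2 (α ⊕ β)}
    (he : e ∈ (completeBipartiteGraph α β).edgeSet) :
    ∃ a b, e = s(Sum.inl a, Sum.inr b) := by
  induction e with
  | h x y =>
    rcases x with a | b <;> rcases y with c | d <;> simp at he
    · exact ⟨a, d, rfl⟩
    · exact ⟨c, b, Sym2.eq_swap⟩

lemma isVEDominatingSet_completeBipartite {α β : Type*} {T : Set (α ⊕ β)} (hT : T.Nonempty) :
    IsVEDominatingSet (completeBipartiteGraph α β) T := by
  intro e he
  obtain ⟨a, b, rfl⟩ := exists_of_mem_edgeSet_completeBipartite he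
  obtain ⟨w, hw⟩ := hT
  refine ⟨w, hw, Sum.inl a, Sum.inr b, rfl, ?_⟩
  rcases w with c | d <;> simp

/-- An edge resolving set misses at most one vertex of each part. -/
lemma isLeft_injOn_compl_of_isEdgeResolvingSet {α β : Type*} [Nonempty α] [Nonempty β]
    {S : Set (α ⊕ β)} (hS : IsEdgeResolvingSet (completeBipartiteGraph α β) S) :
    Set.InjOn Sum.isLeft Sᶜ := by
  classical
  obtain ⟨a₀⟩ := ‹Nonempty α›
  obtain ⟨b₀⟩ := ‹Nonempty β›
  intro u hu v hv huv
  by_contra hne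
  rcases u with a | b <;> rcases v with c | d <;> simp at huv
  · obtain ⟨w, hw, h⟩ := hS s(Sum.inl a, Sum.inr b₀) (by simp) s(Sum.inl c, Sum.inr b₀) (by simp)
      (by simpa using hne)
    rw [edgeDist_completeBipartite, edgeDist_completeBipartite] at h
    have h1 : w ≠ Sum.inl a := fun h => hu (h ▸ hw)
    have h2 : w ≠ Sum.inl c := fun h => hv (h ▸ hw)
    simp [h1, h2] at h
  · obtain ⟨w, hw, h⟩ := hS s(Sum.inl a₀, Sum.inr b) (by simp) s(Sum.inl a₀, Sum.inr d) (by simp)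
      (by simpa using hne)
    rw [edgeDist_completeBipartite, edgeDist_completeBipartite] at h
    have h1 : w ≠ Sum.inr b := fun h => hu (h ▸ hw)
    have h2 : w ≠ Sum.inr d := fun h => hv (h ▸ hw)
    simp [h1, h2] at h

lemma isEdgeResolvingSet_compl_pair {α β : Type*} (a₀ : α) (b₀ : β) :
    IsEdgeResolvingSet (completeBipartiteGraph α β) {Sum.inl a₀, Sum.inr b₀}ᶜ := by
  classical
  intro e he f hf hne
  obtain ⟨a, b, rfl⟩ := exists_of_mem_edgeSet_completeBipartite he
  obtain ⟨c, d, rfl⟩ := exists_of_mem_edgeSet_completeBipartite hf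
  simp only [edgeDist_completeBipartite]
  by_cases hac : a = c
  · subst hac
    have hbd : b ≠ d := by rintro rfl; exact hne rfl
    by_cases hb : b = b₀
    · exact ⟨Sum.inr d, by simp; grind, by simp; grind⟩
    · exact ⟨Sum.inr b, by simpa using hb, by simp; grind⟩
  · by_cases ha : a = a₀
    · exact ⟨Sum.inl c, by simp; grind, by simp; grind⟩
    · exact ⟨Sum.inl a, by simpa using ha, by simp; grind⟩

/-- `γ_emd(K_{n,m}) = n + m - 2` for `n, m ≥ 2`. -/
theorem stmt_3 (n m : ℕ) (hn : 2 ≤ n) (hm : 2 ≤ m) :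
    gammaEmd (completeBipartiteGraph (Fin n) (Fin m)) = n + m - 2 := by
  have : NeZero n := ⟨by omega⟩
  have : NeZero m := ⟨by omega⟩
  refine IsLeast.csInf_eq ⟨?_, ?_⟩
  · have hcard : ({Sum.inl 0, Sum.inr 0}ᶜ : Finset (Fin n ⊕ Fin m)).card = n + m - 2 := by
      rw [Finset.card_compl, Finset.card_pair (by simp)]
      simp
    refine ⟨{Sum.inl 0, Sum.inr 0}ᶜ, hcard, isVEDominatingSet_completeBipartite ?_, ?_⟩
    · rw [Finset.coe_nonempty, ← Finset.card_pos]
      omega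
    · rw [Finset.coe_compl, Finset.coe_pair]
      exact isEdgeResolvingSet_compl_pair 0 0
  · rintro k ⟨S, rfl, -, hS⟩
    have hinj := isLeft_injOn_compl_of_isEdgeResolvingSet hS
    rw [← Finset.coe_compl] at hinj
    have h := Finset.card_le_card_of_injOn (t := (Finset.univ : Finset Bool)) _
      (fun _ _ => Finset.mem_coe.mpr (Finset.mem_univ _)) hinj
    rw [Finset.card_compl] at h
    simp at h
    omega
end

section
/- Let Γ be the wheel graph W_{1,n} or the fan graph F_{1,n} with n ≥ 7. Then γ_md(Γ) = β(Γ) if n ≡ 0, 2 or 4 (mod 5), and γ_md(Γ) = β(Γ) + 1 if n ≡ 1 or 3 (mod 5), where β(W_{1,n}) = β(F_{1,n}) = ⌊(2n+2)/5⌋. -/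
/-!
Both graphs are cones over a rim of maximum degree at most `2`, so two rim vertices are at
distance `0`, `1` or `2`, and the hub is at distance `1` from all of the rim. Hence the rim part `S`
of a resolving set is *locating*: rim vertices outside `S` have pairwise distinct sets of neighbours
in `S`.

Lower bounds (`card_bound`): outside `S`, let `u`, `a`, `b` be the numbers of rim vertices with no,
exactly one, and at least two neighbours in `S`. Locating gives `u ≤ 1` and `a ≤ |S|`, and the degree
bound gives `a + 2 b ≤ 2 |S|`. Therefore `2 n ≤ 5 |S| + 2 u`. So every resolving set has at least
`(2 n - 2) / 5` elements. A dominating resolving set has at least `2 n / 5` elements: either it avoids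
the hub, and then `u = 0`, or the hub contributes one more element.

Upper bounds: unless `n ≡ 3 (mod 5)`, the rim vertices (numbered from `0`) congruent to `1` or `3`
modulo `5` are locating, and they dominate when `n ≡ 0, 2, 4`. If `n ≡ 3`, the last chosen position
is moved from `n - 2` to `n - 3`. A locating set with at least three elements also
separates the hub from the rim, and adding the hub makes any set dominating.
-/

open SimpleGraph

/-- Adjacency of the positions `i, j < n` on the rim: the path `0, …, n - 1`, closed up to a cycle
when `c` holds (`c = True` is the wheel, `c = False` the fan). -/
def RimAdj (c : Prop) (n i j : ℕ) : Prop :=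
  i + 1 = j ∨ j + 1 = i ∨ (c ∧ (i = 0 ∧ j + 1 = n ∨ j = 0 ∧ i + 1 = n))

/-- `Γ` is the cone, with apex `none`, over the path (or the cycle, when `c` holds) on `Fin n`. -/
structure IsRimCone (c : Prop) (n : ℕ) (Γ : SimpleGraph (Option (Fin n))) : Prop where
  hub : ∀ i : Fin n, Γ.Adj none (some i)
  rim : ∀ i j : Fin n, Γ.Adj (some i) (some j) ↔ RimAdj c n i j

/-- Any two rim vertices outside `S` have different sets of neighbours in `S`. -/
def IsLocating {V : Type*} (A : V → V → Prop) (S : Finset V) : Prop :=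
  ∀ i j, i ∉ S → j ∉ S → i ≠ j → ∃ w ∈ S, ¬ (A w i ↔ A w j)

lemma fan_isRimCone (n : ℕ) : IsRimCone False n (fanGraph n) where
  hub i := by simp [fanGraph]
  rim i j := by
    simp only [fanGraph, SimpleGraph.fromRel_adj, RimAdj]
    simp
    simp only [Fin.ext_iff]
    omega

lemma wheel_isRimCone (n : ℕ) (hn : 7 ≤ n) : IsRimCone True n (wheelGraph n) where
  hub i := by simp [wheelGraph]
  rim i j := by
    have hmod : ∀ k : ℕ, k < n → (k + 1) % n = if k + 1 = n then 0 else k + 1 := by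
      intro k hk
      split_ifs with h
      · simp [h]
      · exact Nat.mod_eq_of_lt (by omega)
    have h1 := hmod i i.2
    have h2 := hmod j j.2
    have hi := i.2
    have hj := j.2
    simp only [wheelGraph, SimpleGraph.fromRel_adj, RimAdj]
    simp [h1, h2]
    simp only [Fin.ext_iff]
    split_ifs <;> omega

/-! ### Counting bound for locating sets -/

/-- The counting bound `2 |V| ≤ 5 |S| + 2 u` with `u ≤ 1`, where `u` is the number of vertices
outside `S` without neighbours in `S`. It sums `2 ≤ d i + [d i = 1] + 2 [d i = 0]` over the vertices
`i` outside `S`, where `d i = |N(i) ∩ S|`. -/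
lemma card_bound {V : Type*} [Fintype V] [DecidableEq V] (A : V → V → Prop) [DecidableRel A]
    (hdeg : ∀ w, (Finset.univ.filter (A w)).card ≤ 2) (S : Finset V) (hS : IsLocating A S) :
    2 * Fintype.card V ≤
        5 * S.card + 2 * (Sᶜ.filter fun i => (S.filter fun w => A w i).card = 0).card ∧
      (Sᶜ.filter fun i => (S.filter fun w => A w i).card = 0).card ≤ 1 := by
  set d : V → ℕ := fun i => (S.filter fun w => A w i).card with hd
  have hpt : ∀ i ∈ Sᶜ, 2 ≤ d i + (if d i = 1 then 1 else 0) + 2 * (if d i = 0 then 1 else 0) := by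
    intro i _
    split_ifs <;> omega
  have hsum := Finset.sum_le_sum hpt
  rw [Finset.sum_add_distrib, Finset.sum_add_distrib, ← Finset.mul_sum, ← Finset.card_filter,
    ← Finset.card_filter, Finset.sum_const, smul_eq_mul] at hsum
  have hdouble : ∑ i ∈ Sᶜ, d i ≤ S.card * 2 := by
    calc ∑ i ∈ Sᶜ, d i = ∑ w ∈ S, (Sᶜ.filter (A w)).card :=
          Finset.sum_card_bipartiteAbove_eq_sum_card_bipartiteBelow (fun i w => A w i)
      _ ≤ ∑ _w ∈ S, 2 := Finset.sum_le_sum fun w _ =>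
          (Finset.card_le_card (Finset.filter_subset_filter _ (Finset.subset_univ _))).trans (hdeg w)
      _ = S.card * 2 := by simp
  have hinj : ∀ i j, i ∉ S → j ∉ S →
      (S.filter fun w => A w i) = (S.filter fun w => A w j) → i = j := by
    intro i j hi hj h
    by_contra hne
    obtain ⟨w, hw, hA⟩ := hS i j hi hj hne
    apply hA
    have := Finset.ext_iff.1 h w
    simpa [hw] using this
  have hone : (Sᶜ.filter fun i => d i = 1).card ≤ S.card := by
    -- A vertex with a single neighbour in `S` is determined by the singleton `N(i) ∩ S`.
    have : (Sᶜ.filter fun i => d i = 1).card ≤ (S.powersetCard 1).card := by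
      refine Finset.card_le_card_of_injOn (fun i => S.filter fun w => A w i) ?_ ?_
      · intro i hi
        have hi' := Finset.mem_filter.1 hi
        exact Finset.mem_powersetCard.2 ⟨Finset.filter_subset _ _, hi'.2⟩
      · intro i hi j hj h
        have hi' := Finset.mem_filter.1 hi
        have hj' := Finset.mem_filter.1 hj
        exact hinj i j (by simpa using hi'.1) (by simpa using hj'.1) h
    simpa using this
  have hzero : (Sᶜ.filter fun i => d i = 0).card ≤ 1 := by
    refine Finset.card_le_one.2 fun i hi j hj => ?_
    have hi' := Finset.mem_filter.1 hi
    have hj' := Finset.mem_filter.1 hj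
    refine hinj i j (by simpa using hi'.1) (by simpa using hj'.1) ?_
    rw [Finset.card_eq_zero.1 hi'.2, Finset.card_eq_zero.1 hj'.2]
  have hcompl := Finset.card_add_card_compl S
  refine ⟨?_, hzero⟩
  change _ ≤ 5 * S.card + 2 * (Sᶜ.filter fun i => d i = 0).card
  omega

lemma rimAdj_symm {c : Prop} {n i j : ℕ} : RimAdj c n i j ↔ RimAdj c n j i := by
  unfold RimAdj
  tauto

open scoped Classical in
lemma rim_degree (c : Prop) (n : ℕ) (w : Fin n) :
    (Finset.univ.filter fun i : Fin n => RimAdj c n w i).card ≤ 2 := by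
  rw [← Finset.card_map Fin.valEmbedding]
  refine (Finset.card_le_card (t := {if (w : ℕ) + 1 = n then 0 else (w : ℕ) + 1,
    if (w : ℕ) = 0 then n - 1 else (w : ℕ) - 1}) ?_).trans Finset.card_le_two
  intro k hk
  obtain ⟨i, hi, rfl⟩ := Finset.mem_map.1 hk
  replace hi : RimAdj c n w i := (Finset.mem_filter.1 hi).2
  unfold RimAdj at hi
  have h1 := i.2
  have h2 := w.2
  simp only [Fin.valEmbedding_apply, Finset.mem_insert, Finset.mem_singleton]
  split_ifs <;> omega

open scoped Classical in
lemma rim_card_bound (c : Prop) (n : ℕ) (S : Finset (Fin n))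
    (hS : IsLocating (fun i j : Fin n => RimAdj c n i j) S) :
    2 * n ≤ 5 * S.card + 2 ∧
      ((∀ i ∉ S, ∃ w ∈ S, RimAdj c n w i) → 2 * n ≤ 5 * S.card) := by
  obtain ⟨h1, h2⟩ := card_bound (fun i j : Fin n => RimAdj c n i j) (rim_degree c n) S hS
  rw [Fintype.card_fin] at h1
  refine ⟨by omega, fun hdom => ?_⟩
  have h0 : (Sᶜ.filter fun i : Fin n => (S.filter fun w : Fin n => RimAdj c n w i).card = 0).card = 0 := by
    rw [Finset.card_eq_zero, Finset.filter_eq_empty_iff]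
    intro i hi h
    obtain ⟨w, hw, hA⟩ := hdom i (by simpa using hi)
    rw [Finset.card_eq_zero, Finset.filter_eq_empty_iff] at h
    exact h hw hA
  omega

/-! ### Distances in the cone, and resolving sets -/

section Cone

variable {c : Prop} {n : ℕ} {Γ : SimpleGraph (Option (Fin n))}

lemma IsRimCone.dist_hub (h : IsRimCone c n Γ) (i : Fin n) : Γ.dist (some i) none = 1 :=
  SimpleGraph.dist_eq_one_iff_adj.2 (h.hub i).symm

lemma IsRimCone.dist_hub_left (h : IsRimCone c n Γ) (i : Fin n) : Γ.dist none (some i) = 1 :=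
  SimpleGraph.dist_eq_one_iff_adj.2 (h.hub i)

open scoped Classical in
lemma IsRimCone.dist_rim (h : IsRimCone c n Γ) (i j : Fin n) :
    Γ.dist (some i) (some j) = if i = j then 0 else if RimAdj c n i j then 1 else 2 := by
  split_ifs with h1 h2
  · simp [h1]
  · exact SimpleGraph.dist_eq_one_iff_adj.2 ((h.rim i j).2 h2)
  · let p : Γ.Walk (some i) (some j) := .cons (h.hub i).symm (.cons (h.hub j) .nil)
    have hle : Γ.dist (some i) (some j) ≤ 2 := SimpleGraph.dist_le p
    have hpos : 0 < Γ.dist (some i) (some j) := p.reachable.pos_dist_of_ne (by simpa using h1)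
    have hone : Γ.dist (some i) (some j) ≠ 1 := fun he =>
      h2 ((h.rim i j).1 (SimpleGraph.dist_eq_one_iff_adj.1 he))
    omega

/-- The rim part of a set of vertices of the cone. -/
def rimPart (B : Finset (Option (Fin n))) : Finset (Fin n) := B.eraseNone

lemma IsRimCone.isLocating_rimPart (h : IsRimCone c n Γ) {B : Finset (Option (Fin n))}
    (hB : IsResolvingSet Γ (B : Set (Option (Fin n)))) :
    IsLocating (fun i j : Fin n => RimAdj c n i j) (rimPart B) := by
  classical
  intro i j hi hj hij
  obtain ⟨w, hw, hd⟩ := hB (some i) (some j) (by simpa using hij)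
  rcases w with _ | w
  · simp [h.dist_hub_left] at hd
  · have hwB : w ∈ rimPart B := by simpa [rimPart] using hw
    refine ⟨w, hwB, fun hA => hd ?_⟩
    have hwi : w ≠ i := by rintro rfl; exact hi hwB
    have hwj : w ≠ j := by rintro rfl; exact hj hwB
    rw [h.dist_rim, h.dist_rim]
    simp only [hwi, hwj, if_false]
    simp only at hA
    simp only [hA]

lemma rimPart_card (B : Finset (Option (Fin n))) :
    B.card = (rimPart B).card + if none ∈ B then 1 else 0 := by
  unfold rimPart
  rw [Finset.card_eraseNone_eq_card_erase]
  split_ifs with hm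
  · rw [Finset.card_erase_of_mem hm]
    have := Finset.card_pos.2 ⟨_, hm⟩
    omega
  · rw [Finset.erase_eq_of_notMem hm, add_zero]

lemma IsRimCone.resolving_lower (h : IsRimCone c n Γ) {B : Finset (Option (Fin n))}
    (hB : IsResolvingSet Γ (B : Set (Option (Fin n)))) : 2 * n ≤ 5 * B.card + 2 := by
  have h1 := (rim_card_bound c n _ (h.isLocating_rimPart hB)).1
  have h2 := rimPart_card B
  split_ifs at h2 <;> omega

lemma IsRimCone.dominating_lower (h : IsRimCone c n Γ) {B : Finset (Option (Fin n))}
    (hD : IsDominatingSet Γ (B : Set (Option (Fin n))))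
    (hB : IsResolvingSet Γ (B : Set (Option (Fin n)))) : 2 * n ≤ 5 * B.card := by
  obtain ⟨h1, h1'⟩ := rim_card_bound c n _ (h.isLocating_rimPart hB)
  have h2 := rimPart_card B
  split_ifs at h2 with hm
  · omega
  · have := h1' fun i hi => by
      obtain ⟨w, hw, hA⟩ := hD (some i) (by simpa [rimPart] using hi)
      rcases w with _ | w
      · exact absurd hw hm
      · exact ⟨w, by simpa [rimPart] using hw, (h.rim w i).1 hA⟩
    omega

/-- The assumption `7 ≤ n` forces `3 ≤ |S|`, so no rim vertex is adjacent to all of `S`, which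
separates the hub from the rim. -/
lemma IsRimCone.isResolvingSet_of_isLocating (h : IsRimCone c n Γ) (hn : 7 ≤ n)
    {S : Finset (Fin n)} (hS : IsLocating (fun i j : Fin n => RimAdj c n i j) S)
    {T : Set (Option (Fin n))} (hT : ∀ i ∈ S, some i ∈ T) : IsResolvingSet Γ T := by
  classical
  have hcard := (rim_card_bound c n S hS).1
  have hhub : ∀ i : Fin n, ∃ w ∈ T, Γ.dist w (some i) ≠ Γ.dist w none := by
    intro i
    by_cases hi : i ∈ S
    · exact ⟨some i, hT i hi, by simp [h.dist_hub]⟩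
    · have hdeg := rim_degree c n i
      obtain ⟨w, hw, hw'⟩ : ∃ w ∈ S, w ∉ Finset.univ.filter fun j : Fin n => RimAdj c n i j := by
        by_contra! hcon
        have := Finset.card_le_card (show S ⊆ _ from hcon)
        omega
      refine ⟨some w, hT w hw, ?_⟩
      have hwi : w ≠ i := by rintro rfl; exact hi hw
      have hna : ¬ RimAdj c n w i := by rw [rimAdj_symm]; simpa using hw'
      simp [h.dist_hub, h.dist_rim, hwi, hna]
  intro u v huv
  rcases u with _ | i <;> rcases v with _ | j
  · exact absurd rfl huv
  · obtain ⟨w, hw, hd⟩ := hhub j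
    exact ⟨w, hw, hd.symm⟩
  · exact hhub i
  · have hij : i ≠ j := by simpa using huv
    by_cases hi : i ∈ S
    · refine ⟨some i, hT i hi, ?_⟩
      rw [h.dist_rim, h.dist_rim]
      simp only [if_true, hij, if_false]
      split_ifs <;> omega
    by_cases hj : j ∈ S
    · refine ⟨some j, hT j hj, ?_⟩
      rw [h.dist_rim, h.dist_rim]
      simp only [if_true, hij.symm, if_false]
      split_ifs <;> omega
    obtain ⟨w, hw, hA⟩ := hS i j hi hj hij
    refine ⟨some w, hT w hw, ?_⟩
    have hwi : w ≠ i := by rintro rfl; exact hi hw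
    have hwj : w ≠ j := by rintro rfl; exact hj hw
    rw [h.dist_rim, h.dist_rim]
    simp only [hwi, hwj, if_false]
    split_ifs <;> first | omega | (exfalso; tauto)

end Cone

/-! ### Optimal locating sets -/

/-- The positions congruent to `1` or `3` modulo `5`. -/
def patternSet (n : ℕ) : Finset (Fin n) :=
  Finset.univ.filter fun i => (i : ℕ) % 5 = 1 ∨ (i : ℕ) % 5 = 3

/-- The variant for `n ≡ 3 (mod 5)`: in the final incomplete block of three positions, the first
position is chosen instead of the middle one. -/
def patternSet' (n : ℕ) : Finset (Fin n) :=
  Finset.univ.filter fun i =>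
    (((i : ℕ) % 5 = 1 ∨ (i : ℕ) % 5 = 3) ∧ (i : ℕ) + 3 < n) ∨ (i : ℕ) + 3 = n

lemma card_pattern_range (n : ℕ) :
    ((Finset.range n).filter fun i => i % 5 = 1 ∨ i % 5 = 3).card = (2 * n + 2) / 5 := by
  induction n with
  | zero => simp
  | succ k ih =>
    rw [Finset.range_add_one, Finset.filter_insert]
    split_ifs with hk
    · rw [Finset.card_insert_of_notMem (by simp), ih]
      omega
    · rw [ih]
      omega

lemma patternSet_card (n : ℕ) : (patternSet n).card ≤ (2 * n + 2) / 5 := by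
  rw [← card_pattern_range, ← Finset.card_map Fin.valEmbedding]
  refine Finset.card_le_card fun k hk => ?_
  simp only [patternSet, Finset.mem_map, Finset.mem_filter, Finset.mem_univ, true_and] at hk
  obtain ⟨i, hi, rfl⟩ := hk
  simpa using hi

lemma patternSet'_card (n : ℕ) (hn : 7 ≤ n) (h3 : n % 5 = 3) :
    (patternSet' n).card ≤ (2 * n + 2) / 5 := by
  have h1 : (patternSet' n).card ≤
      (insert (n - 3) ((Finset.range (n - 3)).filter fun i => i % 5 = 1 ∨ i % 5 = 3)).card := by
    rw [← Finset.card_map Fin.valEmbedding]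
    refine Finset.card_le_card fun k hk => ?_
    simp only [patternSet', Finset.mem_map, Finset.mem_filter, Finset.mem_univ, true_and] at hk
    obtain ⟨i, hi, rfl⟩ := hk
    simp only [Fin.valEmbedding_apply, Finset.mem_insert, Finset.mem_filter, Finset.mem_range]
    omega
  have h2 := Finset.card_insert_le (n - 3)
    ((Finset.range (n - 3)).filter fun i => i % 5 = 1 ∨ i % 5 = 3)
  rw [card_pattern_range] at h2
  omega

lemma isLocating_of_lt {n : ℕ} {A : Fin n → Fin n → Prop} {S : Finset (Fin n)}
    (h : ∀ i j, i ∉ S → j ∉ S → i < j → ∃ w ∈ S, ¬ (A w i ↔ A w j)) : IsLocating A S := by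
  intro i j hi hj hij
  rcases lt_or_gt_of_ne hij with hlt | hlt
  · exact h i j hi hj hlt
  · obtain ⟨w, hw, hA⟩ := h j i hj hi hlt
    exact ⟨w, hw, fun hiff => hA hiff.symm⟩

/-- For `i < j`, the separating vertex is `i - 1` unless `i ≡ 0 (mod 5)`, when it is `i + 1`, or
`i + 3` if `j = i + 2`. -/
lemma patternSet_isLocating (c : Prop) (n : ℕ) (hn : 7 ≤ n) (h3 : n % 5 ≠ 3) :
    IsLocating (fun i j : Fin n => RimAdj c n i j) (patternSet n) := by
  refine isLocating_of_lt fun i j hi hj hij => ?_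
  simp only [patternSet, Finset.mem_filter, Finset.mem_univ, true_and, RimAdj, Fin.lt_def]
    at hi hj hij ⊢
  have hj2 := j.2
  by_cases h0 : (i : ℕ) % 5 = 0
  · by_cases hj0 : (j : ℕ) = i + 2
    · exact ⟨⟨i + 3, by omega⟩, by dsimp only; omega, by dsimp only; omega⟩
    · exact ⟨⟨i + 1, by omega⟩, by dsimp only; omega, by dsimp only; omega⟩
  · exact ⟨⟨i - 1, by omega⟩, by dsimp only; omega, by dsimp only; omega⟩

lemma patternSet'_isLocating (c : Prop) (n : ℕ) (hn : 7 ≤ n) (h3 : n % 5 = 3) :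
    IsLocating (fun i j : Fin n => RimAdj c n i j) (patternSet' n) := by
  refine isLocating_of_lt fun i j hi hj hij => ?_
  simp only [patternSet', Finset.mem_filter, Finset.mem_univ, true_and, RimAdj, Fin.lt_def]
    at hi hj hij ⊢
  have hj2 := j.2
  by_cases h0 : (i : ℕ) % 5 = 0
  · by_cases hj0 : (j : ℕ) = i + 2
    · exact ⟨⟨i + 3, by omega⟩, by dsimp only; omega, by dsimp only; omega⟩
    · exact ⟨⟨i + 1, by omega⟩, by dsimp only; omega, by dsimp only; omega⟩
  · exact ⟨⟨i - 1, by omega⟩, by dsimp only; omega, by dsimp only; omega⟩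

lemma exists_isLocating (c : Prop) (n : ℕ) (hn : 7 ≤ n) :
    ∃ S : Finset (Fin n), IsLocating (fun i j : Fin n => RimAdj c n i j) S ∧
      S.card ≤ (2 * n + 2) / 5 := by
  by_cases h3 : n % 5 = 3
  · exact ⟨_, patternSet'_isLocating c n hn h3, patternSet'_card n hn h3⟩
  · exact ⟨_, patternSet_isLocating c n hn h3, patternSet_card n⟩

lemma patternSet_dominates (c : Prop) (n : ℕ) (h : n % 5 = 0 ∨ n % 5 = 2 ∨ n % 5 = 4)
    (i : Fin n) (hi : i ∉ patternSet n) : ∃ w ∈ patternSet n, RimAdj c n w i := by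
  simp only [patternSet, Finset.mem_filter, Finset.mem_univ, true_and, RimAdj] at hi ⊢
  have hi2 := i.2
  by_cases h0 : (i : ℕ) % 5 = 0
  · exact ⟨⟨i + 1, by omega⟩, by dsimp only; omega, by dsimp only; omega⟩
  · exact ⟨⟨i - 1, by omega⟩, by dsimp only; omega, by dsimp only; omega⟩

/-! ### The two dimensions -/

lemma sInf_eq_of_bounds {s : Set ℕ} {k m : ℕ} (hk : k ∈ s) (hkm : k ≤ m) (hm : ∀ l ∈ s, m ≤ l) :
    sInf s = m :=
  le_antisymm ((Nat.sInf_le hk).trans hkm) (hm _ (Nat.sInf_mem ⟨k, hk⟩))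

lemma IsRimCone.main {c : Prop} {n : ℕ} {Γ : SimpleGraph (Option (Fin n))}
    (h : IsRimCone c n Γ) (hn : 7 ≤ n) :
    metricDim Γ = (2 * n + 2) / 5 ∧
    ((n % 5 = 0 ∨ n % 5 = 2 ∨ n % 5 = 4) → gammaMd Γ = (2 * n + 2) / 5) ∧
    ((n % 5 = 1 ∨ n % 5 = 3) → gammaMd Γ = (2 * n + 2) / 5 + 1) := by
  obtain ⟨S, hS, hcard⟩ := exists_isLocating c n hn
  refine ⟨?_, fun hmod => ?_, fun hmod => ?_⟩
  · refine sInf_eq_of_bounds (k := S.card) ⟨S.map .some, by simp,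
      h.isResolvingSet_of_isLocating hn hS (by simp)⟩ hcard ?_
    rintro _ ⟨B, rfl, hB⟩
    have := h.resolving_lower hB
    omega
  · have hP := patternSet_isLocating c n hn (by omega)
    refine sInf_eq_of_bounds (k := (patternSet n).card) ⟨(patternSet n).map .some, by simp, ?_,
      h.isResolvingSet_of_isLocating hn hP (by simp)⟩ (patternSet_card n) ?_
    · rintro (_ | i) hv
      · exact ⟨some ⟨1, by omega⟩, by simp [patternSet], (h.hub _).symm⟩
      · obtain ⟨w, hw, hA⟩ := patternSet_dominates c n hmod i (by simpa using hv)
        exact ⟨some w, by simpa using hw, (h.rim w i).2 hA⟩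
    · rintro _ ⟨B, rfl, hD, hB⟩
      have := h.dominating_lower hD hB
      omega
  · refine sInf_eq_of_bounds (k := S.card + 1) ⟨S.insertNone, by simp, ?_,
      h.isResolvingSet_of_isLocating hn hS (by simp)⟩ (by omega) ?_
    · rintro (_ | i) hv
      · simp at hv
      · exact ⟨none, by simp, h.hub i⟩
    · rintro _ ⟨B, rfl, hD, hB⟩
      have := h.dominating_lower hD hB
      omega

/-- The dominant metric dimension of the wheel `W_{1,n}` and fan `F_{1,n}` for `n ≥ 7`. -/
theorem stmt_5 (n : ℕ) (hn : 7 ≤ n) (Γ : SimpleGraph (Option (Fin n)))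
    (hΓ : Γ = wheelGraph n ∨ Γ = fanGraph n) :
    metricDim Γ = (2 * n + 2) / 5 ∧
    ((n % 5 = 0 ∨ n % 5 = 2 ∨ n % 5 = 4) → gammaMd Γ = metricDim Γ) ∧
    ((n % 5 = 1 ∨ n % 5 = 3) → gammaMd Γ = metricDim Γ + 1) := by
  obtain ⟨c, hc⟩ : ∃ c, IsRimCone c n Γ := by
    rcases hΓ with rfl | rfl
    · exact ⟨True, wheel_isRimCone n hn⟩
    · exact ⟨False, fan_isRimCone n⟩
  obtain ⟨h1, h2, h3⟩ := hc.main hn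
  rw [h1]
  exact ⟨rfl, h2, h3⟩
end

section
/- For every n ≥ 5, the wheel graph W_{1,n} and the fan graph F_{1,n} satisfy γ_emd(W_{1,n}) = γ_emd(F_{1,n}) = n − 1. -/
/-!
Both graphs are a hub joined to all vertices of a rim graph on `Fin n`. Two spokes are
distinguished only by their own rim endpoints, so an edge resolving set misses at most one rim
vertex; this gives the lower bound `n - 1` (`le_card_of_isEdgeResolvingSet`).

Conversely, let `S` be the rim with one vertex `k` removed (`isEdgeResolvingSet_rim`). A vertex is
at distance `0` from exactly the edges containing it, so two edges not distinguished by `S` agree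
away from the hub and `k`. That forces them to be a spoke and a rim edge through `k`. As `n ≥ 5`,
the rim edge has a rim vertex at distance at least `2` from it (`HasFarVertex`); this vertex is not
`k` and is at distance at most `1` from the spoke, so it does distinguish them.
-/

open SimpleGraph

/-- Every rim edge has a rim vertex that is neither an endpoint of it nor adjacent to an endpoint. -/
def HasFarVertex {n : ℕ} (G : SimpleGraph (Option (Fin n))) : Prop :=
  ∀ a b : Fin n, G.Adj (some a) (some b) →
    ∃ c, c ≠ a ∧ c ≠ b ∧ ¬ G.Adj (some c) (some a) ∧ ¬ G.Adj (some c) (some b)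

section Hub

variable {n : ℕ} {G : SimpleGraph (Option (Fin n))}

lemma connected_of_hub (hG : ∀ i, G.Adj none (some i)) : G.Connected := by
  have h : ∀ u, G.Reachable none u := by
    rintro (_ | i)
    · exact Reachable.refl _
    · exact (hG i).reachable
  exact { preconnected := fun u v => (h u).symm.trans (h v), nonempty := ⟨none⟩ }

lemma edgeDist_eq_zero_iff (hG : ∀ i, G.Adj none (some i)) (w : Option (Fin n))
    (e : Sym2 (Option (Fin n))) : edgeDist G w e = 0 ↔ w ∈ e := by
  induction e with
  | _ x y =>
    have hc := connected_of_hub hG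
    simp only [edgeDist, Sym2.lift_mk, Sym2.mem_iff, ← hc.dist_eq_zero_iff]
    omega

lemma edgeDist_spoke_le_one (hG : ∀ i, G.Adj none (some i)) (w : Option (Fin n)) (i : Fin n) :
    edgeDist G w s(none, some i) ≤ 1 := by
  simp only [edgeDist, Sym2.lift_mk]
  refine (min_le_left _ _).trans ?_
  rcases w with _ | j
  · simp
  · exact (dist_eq_one_iff_adj.2 (hG j).symm).le

lemma two_le_edgeDist (hG : ∀ i, G.Adj none (some i)) {w x y : Option (Fin n)}
    (hx : w ≠ x) (hy : w ≠ y) (hwx : ¬ G.Adj w x) (hwy : ¬ G.Adj w y) :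
    2 ≤ edgeDist G w s(x, y) := by
  have hc := connected_of_hub hG
  simp only [edgeDist, Sym2.lift_mk]
  have h1 := mt hc.dist_eq_zero_iff.1 hx
  have h2 := mt hc.dist_eq_zero_iff.1 hy
  have h3 := mt dist_eq_one_iff_adj.1 hwx
  have h4 := mt dist_eq_one_iff_adj.1 hwy
  omega

lemma spoke_or_rim {e : Sym2 (Option (Fin n))} (he : e ∈ G.edgeSet) :
    (∃ i, e = s(none, some i)) ∨ ∃ a b, G.Adj (some a) (some b) ∧ e = s(some a, some b) := by
  induction e with
  | _ x y =>
    rw [mem_edgeSet] at he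
    rcases x with _ | a <;> rcases y with _ | b
    · exact absurd he G.irrefl
    · exact Or.inl ⟨b, rfl⟩
    · exact Or.inl ⟨a, Sym2.eq_swap⟩
    · exact Or.inr ⟨a, b, he, rfl⟩

lemma le_card_of_isEdgeResolvingSet (hG : ∀ i, G.Adj none (some i))
    (S : Finset (Option (Fin n))) (hS : IsEdgeResolvingSet G ↑S) : n - 1 ≤ S.card := by
  -- `M` is the set of rim vertices missing from `S`.
  set M : Finset (Fin n) := Finset.univ.filter (fun i => some i ∉ S) with hM
  have hM1 : M.card ≤ 1 := by
    rw [Finset.card_le_one]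
    intro i hi j hj
    by_contra hij
    simp only [hM, Finset.mem_filter, Finset.mem_univ, true_and] at hi hj
    obtain ⟨w, hw, hne⟩ := hS s(none, some i) (hG i) s(none, some j) (hG j) (by simpa using hij)
    have h1 := edgeDist_eq_zero_iff hG w s(none, some i)
    have h2 := edgeDist_eq_zero_iff hG w s(none, some j)
    have h3 := edgeDist_spoke_le_one hG w i
    have h4 := edgeDist_spoke_le_one hG w j
    have hwi : w ≠ some i := fun h => hi (h ▸ hw)
    have hwj : w ≠ some j := fun h => hj (h ▸ hw)
    simp only [Sym2.mem_iff, hwi, hwj, or_false] at h1 h2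
    have := h1.trans h2.symm
    omega
  have hcard : (Finset.univ.filter (fun i : Fin n => some i ∈ S)).card + M.card = n := by
    have h := Finset.card_filter_add_card_filter_not (s := (Finset.univ : Finset (Fin n)))
      (fun i => some i ∈ S)
    rw [Finset.card_univ, Fintype.card_fin] at h
    convert h
  have hle : (Finset.univ.filter (fun i : Fin n => some i ∈ S)).card ≤ S.card :=
    Finset.card_le_card_of_injOn some (fun i hi => by simpa using hi)
      (Option.some_injective _).injOn
  omega

lemma isVEDominatingSet_rim (hG : ∀ i, G.Adj none (some i)) (k l : Fin n) (hkl : l ≠ k) :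
    IsVEDominatingSet G {w | w ≠ none ∧ w ≠ some k} := by
  intro e he
  rcases spoke_or_rim he with ⟨i, rfl⟩ | ⟨a, b, hab, rfl⟩
  · exact ⟨some l, by simpa using hkl, none, some i, rfl, Or.inr (Or.inr (Or.inl (hG l).symm))⟩
  · by_cases ha : a = k
    · refine ⟨some b, ⟨by simp, ?_⟩, some a, some b, rfl, by simp⟩
      rintro h
      exact hab.ne (by rw [h, ha])
    · exact ⟨some a, by simpa using ha, some a, some b, rfl, by simp⟩

/-- If the rim edge avoids `k`, its endpoint off the spoke separates it from the spoke; otherwise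
its far vertex does. -/
lemma resolve_spoke_rim (hG : ∀ i, G.Adj none (some i)) (hfar : HasFarVertex G) (k i a b : Fin n)
    (hab : G.Adj (some a) (some b)) :
    ∃ w ∈ {w : Option (Fin n) | w ≠ none ∧ w ≠ some k},
      edgeDist G w s(none, some i) ≠ edgeDist G w s(some a, some b) := by
  by_cases hk : k = a ∨ k = b
  · obtain ⟨c, hca, hcb, h1, h2⟩ := hfar a b hab
    refine ⟨some c, ⟨by simp, by grind⟩, ?_⟩
    have h3 := two_le_edgeDist hG (by simpa using hca) (by simpa using hcb) h1 h2
    have h4 := edgeDist_spoke_le_one hG (some c) i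
    omega
  · have hne : a ≠ b := fun h => hab.ne (by rw [h])
    -- Both `a` and `b` are available, and at most one of them lies on the spoke.
    obtain ⟨c, hc, hci⟩ : ∃ c, (c = a ∨ c = b) ∧ c ≠ i := by
      by_cases hai : a = i
      · exact ⟨b, Or.inr rfl, fun h => hne (hai.trans h.symm)⟩
      · exact ⟨a, Or.inl rfl, hai⟩
    refine ⟨some c, ⟨by simp, by grind⟩, fun h => ?_⟩
    have h0 := (edgeDist_eq_zero_iff hG (some c) s(some a, some b)).2 (by simpa using hc)
    have := (edgeDist_eq_zero_iff hG (some c) s(none, some i)).1 (h.trans h0)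
    simp [hci] at this

lemma isEdgeResolvingSet_rim (hG : ∀ i, G.Adj none (some i)) (hfar : HasFarVertex G) (k : Fin n) :
    IsEdgeResolvingSet G {w | w ≠ none ∧ w ≠ some k} := by
  intro e he f hf hef
  by_cases hsep : ∃ w : Fin n, w ≠ k ∧ ¬ (some w ∈ e ↔ some w ∈ f)
  · obtain ⟨w, hwk, hw⟩ := hsep
    refine ⟨some w, ⟨by simp, by simpa using hwk⟩, fun h => hw ?_⟩
    rw [← edgeDist_eq_zero_iff hG, ← edgeDist_eq_zero_iff hG, h]
  · push Not at hsep
    rcases spoke_or_rim he with ⟨i, rfl⟩ | ⟨a, b, hab, rfl⟩ <;>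
      rcases spoke_or_rim hf with ⟨j, rfl⟩ | ⟨c, d, hcd, rfl⟩
    · exfalso
      have h1 := hsep i
      have h2 := hsep j
      simp at h1 h2 hef
      grind
    · exact resolve_spoke_rim hG hfar k i c d hcd
    · obtain ⟨w, hw, h⟩ := resolve_spoke_rim hG hfar k j a b hab
      exact ⟨w, hw, h.symm⟩
    · exfalso
      have hab' : a ≠ b := fun h => hab.ne (by rw [h])
      have hcd' : c ≠ d := fun h => hcd.ne (by rw [h])
      have h1 := hsep a
      have h2 := hsep b
      have h3 := hsep c
      have h4 := hsep d
      simp at h1 h2 h3 h4 hef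
      grind

lemma gammaEmd_of_hub (hn : 2 ≤ n) (hG : ∀ i, G.Adj none (some i)) (hfar : HasFarVertex G) :
    gammaEmd G = n - 1 := by
  have hrim : n - 1 ∈ {m | ∃ S : Finset (Option (Fin n)),
      S.card = m ∧ IsVEDominatingSet G ↑S ∧ IsEdgeResolvingSet G ↑S} := by
    let k : Fin n := ⟨0, by omega⟩
    have hcoe : (((Finset.univ.erase none).erase (some k) : Finset (Option (Fin n))) :
        Set (Option (Fin n))) = {w | w ≠ none ∧ w ≠ some k} := by
      ext w
      simp
    refine ⟨(Finset.univ.erase none).erase (some k), ?_, ?_, ?_⟩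
    · rw [Finset.card_erase_of_mem (by simp), Finset.card_erase_of_mem (by simp)]
      simp
    · rw [hcoe]
      exact isVEDominatingSet_rim hG k ⟨1, by omega⟩ (by simp [k])
    · rw [hcoe]
      exact isEdgeResolvingSet_rim hG hfar k
  refine le_antisymm (Nat.sInf_le hrim) (le_csInf ⟨_, hrim⟩ ?_)
  rintro _ ⟨S, rfl, -, hS⟩
  exact le_card_of_isEdgeResolvingSet hG S hS

end Hub

lemma wheelGraph_adj_some {n : ℕ} (a b : Fin n) :
    (wheelGraph n).Adj (some a) (some b) ↔
      a ≠ b ∧ ((a.val + 1) % n = b.val ∨ (b.val + 1) % n = a.val) := by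
  simp [wheelGraph]

lemma fanGraph_adj_some {n : ℕ} (a b : Fin n) :
    (fanGraph n).Adj (some a) (some b) ↔
      a ≠ b ∧ (a.val + 1 = b.val ∨ b.val + 1 = a.val) := by
  simp [fanGraph]

lemma succ_mod_eq {n : ℕ} (a : Fin n) :
    (a.val + 1) % n = if a.val + 1 = n then 0 else a.val + 1 := by
  split_ifs with h
  · rw [h, Nat.mod_self]
  · exact Nat.mod_eq_of_lt (by omega)

lemma hasFarVertex_wheelGraph {n : ℕ} (hn : 5 ≤ n) : HasFarVertex (wheelGraph n) := by
  intro a b hab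
  simp only [wheelGraph_adj_some, succ_mod_eq, ne_eq, Fin.ext_iff] at hab ⊢
  have ha := a.isLt
  have hb := b.isLt
  rcases hab.2 with h | h
  -- Three steps beyond the first endpoint of the edge.
  · refine ⟨⟨if a.val + 3 < n then a.val + 3 else a.val + 3 - n, by split_ifs <;> omega⟩, ?_⟩
    dsimp only
    split_ifs at h ⊢ <;> omega
  · refine ⟨⟨if b.val + 3 < n then b.val + 3 else b.val + 3 - n, by split_ifs <;> omega⟩, ?_⟩
    dsimp only
    split_ifs at h ⊢ <;> omega

lemma hasFarVertex_fanGraph {n : ℕ} (hn : 5 ≤ n) : HasFarVertex (fanGraph n) := by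
  intro a b hab
  simp only [fanGraph_adj_some, ne_eq, Fin.ext_iff] at hab ⊢
  have ha := a.isLt
  have hb := b.isLt
  -- An edge inside `{2, 3, …}` is far from `0`; any other edge lies in `{0, 1, 2}`, far from `4`.
  by_cases h : 2 ≤ a.val ∧ 2 ≤ b.val
  · refine ⟨⟨0, by omega⟩, ?_⟩
    dsimp only
    omega
  · refine ⟨⟨4, by omega⟩, ?_⟩
    dsimp only
    omega

/-- `γ_emd(W_{1,n}) = γ_emd(F_{1,n}) = n - 1` for `n ≥ 5`. -/
theorem stmt_7 (n : ℕ) (hn : 5 ≤ n) :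
    gammaEmd (wheelGraph n) = n - 1 ∧ gammaEmd (fanGraph n) = n - 1 :=
  ⟨gammaEmd_of_hub (by omega) (fun i => by simp [wheelGraph]) (hasFarVertex_wheelGraph hn),
    gammaEmd_of_hub (by omega) (fun i => by simp [fanGraph]) (hasFarVertex_fanGraph hn)⟩
end

section
/- For every n ≥ 1, the Cartesian product P_n □ P_2 of the path P_n with the path P_2 satisfies γ_ve(P_n □ P_2) = ⌈n/3⌉. -/
/-!
The lower bound counts rungs: a vertex in column `c` of the ladder `P_n □ P_2` can only ve-dominate
the rungs of columns `c - 1`, `c`, `c + 1`, so the `n` rungs need at least `n / 3` vertices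
(`le_three_mul_card`).

For the upper bound, cut the columns into consecutive blocks of three (the last one possibly
shorter), and take one vertex in the middle column of each block, alternating between the two rows;
in the last block the column is capped at `n - 1` (`ladderVertex`). Inside a block everything is
dominated by the vertex of that block. The two horizontal edges joining consecutive blocks are
dominated one by each of the two neighbouring chosen vertices, as these lie in different rows
(`exists_dominating_horizontal`).
-/

open SimpleGraph

/-- Adjacency in the ladder, in terms of natural-number coordinates. -/
lemma ladder_adj_iff {n : ℕ} (x y : Fin n × Fin 2) :
    ((pathGraph n).boxProd (pathGraph 2)).Adj x y ↔
      ((x.1.val + 1 = y.1.val ∨ y.1.val + 1 = x.1.val) ∧ x.2.val = y.2.val) ∨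
      (x.2.val ≠ y.2.val ∧ x.1.val = y.1.val) := by
  rw [boxProd_adj, pathGraph_adj, pathGraph_adj, Fin.ext_iff, Fin.ext_iff]
  have := x.2.isLt
  have := y.2.isLt
  omega

/-- A ve-dominating set of the ladder has a vertex within one column of every rung, and each vertex
is that close to at most three columns. -/
lemma le_three_mul_card {n : ℕ} (T : Finset (Fin n × Fin 2))
    (hT : IsVEDominatingSet ((pathGraph n).boxProd (pathGraph 2)) (T : Set (Fin n × Fin 2))) :
    n ≤ 3 * T.card := by
  have hsub : Finset.range n ⊆
      T.biUnion fun w => Finset.Icc (w.1.val - 1) (w.1.val + 1) := by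
    intro i hi
    rw [Finset.mem_range] at hi
    obtain ⟨w, hw, x, y, he, hd⟩ := hT s((⟨i, hi⟩, 0), (⟨i, hi⟩, 1)) (by
      rw [mem_edgeSet, ladder_adj_iff]
      simp)
    have hx : x.1.val = i ∧ y.1.val = i := by
      rcases Sym2.eq_iff.mp he with ⟨h1, h2⟩ | ⟨h1, h2⟩ <;> simp [← h1, ← h2]
    rw [Finset.mem_biUnion]
    refine ⟨w, hw, ?_⟩
    rw [ladder_adj_iff, ladder_adj_iff] at hd
    rw [Finset.mem_Icc]
    rcases hd with rfl | rfl | h | h <;> omega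
  have h1 := Finset.card_le_card hsub
  have h2 : (T.biUnion fun w => Finset.Icc (w.1.val - 1) (w.1.val + 1)).card ≤ T.card * 3 := by
    refine Finset.card_biUnion_le_card_mul _ _ _ fun w _ => ?_
    rw [Nat.card_Icc]
    omega
  rw [Finset.card_range] at h1
  omega

/-- The vertex chosen in the `j`-th block of three columns: the middle column `3 * j + 1`, capped at
the last column `n - 1`, in the row given by the parity of `j`. -/
def ladderVertex (n : ℕ) (hn : 1 ≤ n) (j : ℕ) : Fin n × Fin 2 :=
  (⟨min (3 * j + 1) (n - 1), by omega⟩, ⟨j % 2, by omega⟩)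

lemma exists_dominating_rung {n : ℕ} (hn : 1 ≤ n) (x y : Fin n × Fin 2)
    (hxy : x.1.val = y.1.val) (hne : x.2.val ≠ y.2.val) :
    ∃ j < (n + 2) / 3, VEDominates ((pathGraph n).boxProd (pathGraph 2))
      (ladderVertex n hn j) s(x, y) := by
  have := x.1.isLt
  have := x.2.isLt
  have := y.2.isLt
  refine ⟨x.1.val / 3, by omega, x, y, rfl, ?_⟩
  simp only [ladder_adj_iff, Prod.ext_iff, Fin.ext_iff, ladderVertex]
  omega

lemma exists_dominating_horizontal {n : ℕ} (hn : 1 ≤ n) (x y : Fin n × Fin 2)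
    (hxy : x.1.val + 1 = y.1.val) (hrow : x.2.val = y.2.val) :
    ∃ j < (n + 2) / 3, VEDominates ((pathGraph n).boxProd (pathGraph 2))
      (ladderVertex n hn j) s(x, y) := by
  have := y.1.isLt
  have := x.2.isLt
  -- The block to the right is needed only when the edge joins two blocks and the vertex chosen in
  -- the left block lies in the other row.
  by_cases h : x.1.val % 3 = 2 ∧ x.1.val / 3 % 2 ≠ x.2.val
  · refine ⟨x.1.val / 3 + 1, by omega, x, y, rfl, ?_⟩
    simp only [ladder_adj_iff, Prod.ext_iff, Fin.ext_iff, ladderVertex]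
    omega
  · refine ⟨x.1.val / 3, by omega, x, y, rfl, ?_⟩
    simp only [ladder_adj_iff, Prod.ext_iff, Fin.ext_iff, ladderVertex]
    omega

lemma isVEDominatingSet_ladderVertex {n : ℕ} (hn : 1 ≤ n) :
    IsVEDominatingSet ((pathGraph n).boxProd (pathGraph 2))
      (((Finset.range ((n + 2) / 3)).image (ladderVertex n hn) : Finset (Fin n × Fin 2)) :
        Set (Fin n × Fin 2)) := by
  intro e
  induction e using Sym2.ind with
  | _ x y =>
    intro he
    rw [mem_edgeSet, ladder_adj_iff] at he
    have key : ∃ j < (n + 2) / 3, VEDominates ((pathGraph n).boxProd (pathGraph 2))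
        (ladderVertex n hn j) s(x, y) := by
      rcases he with ⟨h | h, hrow⟩ | ⟨hne, h⟩
      · exact exists_dominating_horizontal hn x y h hrow
      · rw [Sym2.eq_swap]
        exact exists_dominating_horizontal hn y x h hrow.symm
      · exact exists_dominating_rung hn x y h hne
    obtain ⟨j, hj, hd⟩ := key
    exact ⟨_, Finset.mem_coe.mpr (Finset.mem_image_of_mem _ (Finset.mem_range.mpr hj)), hd⟩

/-- `γ_ve(P_n □ P_2) = ⌈n/3⌉` for `n ≥ 1`. -/
theorem stmt_8 (n : ℕ) (hn : 1 ≤ n) :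
    gammaVe ((pathGraph n).boxProd (pathGraph 2)) = (n + 2) / 3 := by
  apply le_antisymm
  · have hle : gammaVe ((pathGraph n).boxProd (pathGraph 2)) ≤
        ((Finset.range ((n + 2) / 3)).image (ladderVertex n hn)).card :=
      Nat.sInf_le ⟨_, rfl, isVEDominatingSet_ladderVertex hn⟩
    exact hle.trans (Finset.card_image_le.trans (Finset.card_range _).le)
  · obtain ⟨T, hcard, hT⟩ := Nat.sInf_mem
      (s := {k | ∃ T : Finset (Fin n × Fin 2), T.card = k ∧
        IsVEDominatingSet ((pathGraph n).boxProd (pathGraph 2)) (T : Set (Fin n × Fin 2))})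
      ⟨_, _, rfl, isVEDominatingSet_ladderVertex hn⟩
    have h := le_three_mul_card T hT
    rw [gammaVe, ← hcard]
    omega
end

section
/- For every n ≥ 3, the Cartesian product C_n □ P_2 of the cycle C_n with the path P_2 (the n-prism) has edge metric dimension β_e(C_n □ P_2) = 3. -/
/-!
Lower bound: let `a` belong to an edge resolving set `A` of a graph in which every vertex has at
least three neighbours. The edges at `a` all have distance `0` to `a`, and for any other vertex `b`
their distances to `b` take only the two values `d(b,a) - 1` and `d(b,a)`. By pigeonhole a single
further vertex `b` cannot separate three edges at `a`, so `|A| ≥ 3`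
(`three_le_card_of_resolving`). The prism is 3-regular.

Upper bound: `{(0,0), (0,1), (1,0)}` is edge resolving. The difference of the distances to `(0,0)`
and `(0,1)` is `-1`, `1` or `0` according to whether the edge lies in the first copy of the cycle,
in the second copy, or is a rung. Knowing this, the distance to `(0,0)` determines the position
along the cycle up to the reflection fixing `0`, and the distance to `(1,0)` removes this ambiguity.
The explicit distances in the prism come from `dist_eq_of_potential`.
-/

open SimpleGraph

/-! ### Lower bound -/

lemma edgeDist_mk {V : Type*} (G : SimpleGraph V) (w x y : V) :
    edgeDist G w s(x, y) = min (G.dist w x) (G.dist w y) := rfl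

/-- Two of any three edges at a vertex `a` are at equal distance from any given vertex `b`, so `a`
together with one further vertex never resolves them. -/
lemma three_le_card_of_resolving {V : Type*} [Nonempty V] {G : SimpleGraph V}
    (hG : ∀ a, ∃ x y z, G.Adj a x ∧ G.Adj a y ∧ G.Adj a z ∧ x ≠ y ∧ x ≠ z ∧ y ≠ z)
    {A : Finset V} (hA : IsEdgeResolvingSet G ↑A) : 3 ≤ A.card := by
  classical
  have edge_ne : ∀ {a x y : V}, x ≠ y → s(a, x) ≠ s(a, y) := by
    intro a x y hxy h
    exact hxy (Sym2.congr_right.mp h)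
  obtain ⟨a, ha⟩ : A.Nonempty := by
    obtain ⟨v⟩ := ‹Nonempty V›
    obtain ⟨x, y, z, hx, hy, hz, hxy, -, -⟩ := hG v
    obtain ⟨w, hw, -⟩ := hA s(v, x) hx s(v, y) hy (edge_ne hxy)
    exact ⟨w, hw⟩
  by_contra! hcard
  obtain ⟨b, hb⟩ : ∃ b, ∀ w ∈ A, w = a ∨ w = b := by
    have h1 : (A.erase a).card ≤ 1 := by
      rw [Finset.card_erase_of_mem ha]; omega
    rcases (A.erase a).eq_empty_or_nonempty with h | ⟨b, hb⟩
    · refine ⟨a, fun w hw => ?_⟩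
      by_contra hne
      have : w ∈ A.erase a := Finset.mem_erase.mpr ⟨by tauto, hw⟩
      simp [h] at this
    · refine ⟨b, fun w hw => ?_⟩
      by_contra! hne
      exact hne.2 (Finset.card_le_one.mp h1 w (Finset.mem_erase.mpr ⟨hne.1, hw⟩) b hb)
  have key : ∀ x y, G.Adj a x → G.Adj a y → x ≠ y →
      min (G.dist b a) (G.dist b x) ≠ min (G.dist b a) (G.dist b y) := by
    intro x y hx hy hxy
    obtain ⟨w, hw, hne⟩ := hA s(a, x) hx s(a, y) hy (edge_ne hxy)
    rw [edgeDist_mk, edgeDist_mk] at hne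
    rcases hb w hw with rfl | rfl
    · simp at hne
    · exact hne
  obtain ⟨x, y, z, hx, hy, hz, hxy, hxz, hyz⟩ := hG a
  have h1 := key x y hx hy hxy
  have h2 := key x z hx hz hxz
  have h3 := key y z hy hz hyz
  have d1 := hx.diff_dist_adj (u := b)
  have d2 := hy.diff_dist_adj (u := b)
  have d3 := hz.diff_dist_adj (u := b)
  omega

/-! ### Distances and edges in the prism -/

/-- A function that vanishes at `w`, increases by at most one along each edge, and can be decreased
by moving to a neighbour from any vertex other than `w`, is the distance from `w`. -/
lemma dist_eq_of_potential {V : Type*} {G : SimpleGraph V} (w : V) (f : V → ℕ) (h0 : f w = 0)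
    (hlip : ∀ x y, G.Adj x y → f y ≤ f x + 1)
    (hdesc : ∀ x, x ≠ w → ∃ y, G.Adj y x ∧ f y < f x) (x : V) : G.dist w x = f x := by
  have lower : ∀ {u v : V} (p : G.Walk u v), f v ≤ f u + p.length := by
    intro u v p
    induction p with
    | nil => simp
    | cons h p ih =>
      have := hlip _ _ h
      rw [SimpleGraph.Walk.length_cons]
      omega
  have upper : ∀ k x, f x ≤ k → ∃ p : G.Walk w x, p.length ≤ f x := by
    intro k
    induction k with
    | zero =>
      intro x hx
      by_cases hxw : x = w
      · subst hxw; exact ⟨.nil, by simp⟩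
      · obtain ⟨y, -, hy⟩ := hdesc x hxw
        omega
    | succ k ih =>
      intro x hx
      by_cases hxw : x = w
      · subst hxw; exact ⟨.nil, by simp⟩
      · obtain ⟨y, hadj, hy⟩ := hdesc x hxw
        obtain ⟨p, hp⟩ := ih y (by omega)
        refine ⟨p.concat hadj, ?_⟩
        rw [SimpleGraph.Walk.length_concat]
        omega
  obtain ⟨p, hp⟩ := upper _ x le_rfl
  obtain ⟨q, hq⟩ := p.reachable.exists_walk_length_eq_dist
  have h1 := lower q
  have h2 := SimpleGraph.dist_le p
  omega

lemma cycle_adj_iff {n : ℕ} (hn : 3 ≤ n) (i j : Fin n) :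
    (cycleGraph n).Adj i j ↔ i.val + 1 = j.val ∨ (i.val + 1 = n ∧ j.val = 0) ∨
      j.val + 1 = i.val ∨ (j.val + 1 = n ∧ i.val = 0) := by
  rw [cycleGraph_adj']
  have hi := i.isLt
  have hj := j.isLt
  rcases lt_trichotomy i j with h | h | h
  · rw [Fin.coe_sub_iff_lt.mpr h, Fin.coe_sub_iff_le.mpr h.le]
    have : i.val < j.val := h
    omega
  · subst h
    rw [Fin.coe_sub_iff_le.mpr le_rfl]
    omega
  · rw [Fin.coe_sub_iff_lt.mpr h, Fin.coe_sub_iff_le.mpr h.le]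
    have : j.val < i.val := h
    omega

lemma prism_adj_iff {n : ℕ} (hn : 3 ≤ n) (i j : Fin n) (s t : Fin 2) :
    ((cycleGraph n).boxProd (pathGraph 2)).Adj (i, s) (j, t) ↔
      ((i.val + 1 = j.val ∨ (i.val + 1 = n ∧ j.val = 0) ∨
        j.val + 1 = i.val ∨ (j.val + 1 = n ∧ i.val = 0)) ∧ s.val = t.val) ∨
      (s.val ≠ t.val ∧ i.val = j.val) := by
  rw [boxProd_adj, cycle_adj_iff hn, pathGraph_adj, Fin.ext_iff, Fin.ext_iff]
  have hs := s.isLt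
  have ht := t.isLt
  dsimp only
  omega

/-- The distance between positions `a` and `i` on the cycle `C_n`; the sum of the two truncated
differences is `|i - a|`. -/
def cycDist (n a i : ℕ) : ℕ := min ((i - a) + (a - i)) (n - ((i - a) + (a - i)))

lemma prism_dist {n : ℕ} (hn : 3 ≤ n) (a : Fin n) (t : Fin 2) (x : Fin n × Fin 2) :
    ((cycleGraph n).boxProd (pathGraph 2)).dist (a, t) x =
      cycDist n a x.1 + ((x.2.val - t.val) + (t.val - x.2.val)) := by
  have ha := a.isLt
  have ht := t.isLt
  refine dist_eq_of_potential (a, t)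
    (fun x => cycDist n a x.1 + ((x.2.val - t.val) + (t.val - x.2.val))) ?_ ?_ ?_ x
  · simp [cycDist]
  · rintro ⟨i, s⟩ ⟨j, r⟩ h
    rw [prism_adj_iff hn] at h
    have := i.isLt
    have := j.isLt
    have := s.isLt
    have := r.isLt
    dsimp only [cycDist]
    omega
  · rintro ⟨i, s⟩ h
    have hi := i.isLt
    have hs := s.isLt
    by_cases hst : s = t
    · subst hst
      have hia : i.val ≠ a.val := fun heq => h (by rw [Fin.ext heq])
      -- The neighbour of `i` on a shortest arc towards `a`, possibly wrapping around `0`.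
      obtain ⟨j, hj, h1, h2⟩ : ∃ j, j < n ∧
          (i.val + 1 = j ∨ (i.val + 1 = n ∧ j = 0) ∨ j + 1 = i.val ∨ (j + 1 = n ∧ i.val = 0)) ∧
          cycDist n a j < cycDist n a i := by
        unfold cycDist
        by_cases hup : (i.val < a.val ∧ 2 * (a.val - i.val) ≤ n) ∨
            (a.val < i.val ∧ n < 2 * (i.val - a.val))
        · by_cases hw : i.val + 1 = n
          · exact ⟨0, by omega, by omega, by omega⟩
          · exact ⟨i.val + 1, by omega, by omega, by omega⟩
        · by_cases hw : i.val = 0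
          · exact ⟨n - 1, by omega, by omega, by omega⟩
          · exact ⟨i.val - 1, by omega, by omega, by omega⟩
      refine ⟨(⟨j, hj⟩, s), ?_, ?_⟩
      · rw [prism_adj_iff hn]
        dsimp only
        omega
      · dsimp only
        omega
    · have hst' : s.val ≠ t.val := fun h' => hst (Fin.ext h')
      refine ⟨(i, t), ?_, ?_⟩
      · rw [prism_adj_iff hn]
        omega
      · dsimp only
        omega

/-- An edge of the prism joins cyclically consecutive vertices of one copy of the cycle,
or is a rung. -/
lemma prism_edge_cases {n : ℕ} (hn : 3 ≤ n) (e : Sym2 (Fin n × Fin 2))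
    (he : e ∈ ((cycleGraph n).boxProd (pathGraph 2)).edgeSet) :
    (∃ (i j : Fin n) (s : Fin 2), (i.val + 1 = j.val ∨ (i.val + 1 = n ∧ j.val = 0)) ∧
      e = s((i, s), (j, s))) ∨ ∃ i : Fin n, e = s((i, 0), (i, 1)) := by
  induction e using Sym2.ind with
  | _ x y =>
  obtain ⟨i, s⟩ := x
  obtain ⟨j, t⟩ := y
  rw [mem_edgeSet, prism_adj_iff hn] at he
  rcases he with ⟨h, hst⟩ | ⟨hst, hij⟩
  · obtain rfl := Fin.ext hst
    left
    rcases h with h | h | h | h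
    · exact ⟨i, j, s, .inl h, rfl⟩
    · exact ⟨i, j, s, .inr h, rfl⟩
    · exact ⟨j, i, s, .inl h, Sym2.eq_swap⟩
    · exact ⟨j, i, s, .inr h, Sym2.eq_swap⟩
  · obtain rfl := Fin.ext hij
    right
    refine ⟨i, ?_⟩
    fin_cases s <;> fin_cases t
    · simp at hst
    · rfl
    · exact Sym2.eq_swap
    · simp at hst

lemma prism_three_neighbors {n : ℕ} (hn : 3 ≤ n) (a : Fin n × Fin 2) :
    ∃ x y z, ((cycleGraph n).boxProd (pathGraph 2)).Adj a x ∧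
      ((cycleGraph n).boxProd (pathGraph 2)).Adj a y ∧
      ((cycleGraph n).boxProd (pathGraph 2)).Adj a z ∧ x ≠ y ∧ x ≠ z ∧ y ≠ z := by
  obtain ⟨i, s⟩ := a
  have hi := i.isLt
  have hs := s.isLt
  obtain ⟨j, hj, h1⟩ : ∃ j, j < n ∧ (i.val + 1 = j ∨ (i.val + 1 = n ∧ j = 0)) := by
    by_cases hw : i.val + 1 = n
    · exact ⟨0, by omega, by omega⟩
    · exact ⟨i.val + 1, by omega, by omega⟩
  obtain ⟨k, hk, h2⟩ : ∃ k, k < n ∧ (k + 1 = i.val ∨ (k + 1 = n ∧ i.val = 0)) := by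
    by_cases hw : i.val = 0
    · exact ⟨n - 1, by omega, by omega⟩
    · exact ⟨i.val - 1, by omega, by omega⟩
  refine ⟨(⟨j, hj⟩, s), (⟨k, hk⟩, s), (i, ⟨1 - s.val, by omega⟩), ?_, ?_, ?_, ?_, ?_, ?_⟩
  · rw [prism_adj_iff hn]; dsimp only; omega
  · rw [prism_adj_iff hn]; dsimp only; omega
  · rw [prism_adj_iff hn]; dsimp only; omega
  all_goals
    rw [Ne, Prod.ext_iff, Fin.ext_iff, Fin.ext_iff]
    dsimp only
    omega

/-! ### Upper bound -/

lemma cycEdge_zero {n i j : ℕ} (hi : i < n)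
    (h : i + 1 = j ∨ (i + 1 = n ∧ j = 0)) :
    min (cycDist n 0 i) (cycDist n 0 j) = min i (n - 1 - i) := by
  unfold cycDist
  omega

lemma cycEdge_one {n i j : ℕ} (hn : 3 ≤ n) (hi : i < n)
    (h : i + 1 = j ∨ (i + 1 = n ∧ j = 0)) :
    min (cycDist n 1 i) (cycDist n 1 j) = if i = 0 then 0 else min (i - 1) (n - i) := by
  unfold cycDist
  split_ifs <;> omega

lemma cycDist_zero (n i : ℕ) : cycDist n 0 i = min i (n - i) := by
  unfold cycDist
  omega

lemma cycDist_one {n i : ℕ} (hn : 3 ≤ n) :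
    cycDist n 1 i = if i = 0 then 1 else min (i - 1) (n + 1 - i) := by
  unfold cycDist
  split_ifs <;> omega

lemma prism_resolving {n : ℕ} (hn : 3 ≤ n) :
    IsEdgeResolvingSet ((cycleGraph n).boxProd (pathGraph 2))
      {((⟨0, by omega⟩ : Fin n), (0 : Fin 2)), (⟨0, by omega⟩, 1), (⟨1, by omega⟩, 0)} := by
  intro e he f hf hef
  by_contra! hcon
  have h1 := hcon (⟨0, by omega⟩, 0) (by simp)
  have h2 := hcon (⟨0, by omega⟩, 1) (by simp)
  have h3 := hcon (⟨1, by omega⟩, 0) (by simp)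
  apply hef
  rcases prism_edge_cases hn e he with ⟨i, j, s, hij, rfl⟩ | ⟨i, rfl⟩ <;>
  rcases prism_edge_cases hn f hf with ⟨i', j', s', hij', rfl⟩ | ⟨i', rfl⟩ <;>
  simp only [edgeDist_mk, prism_dist hn, Fin.val_zero, Fin.val_one, Nat.add_min_add_right]
    at h1 h2 h3
  · have hs := s.isLt
    have hs' := s'.isLt
    rw [cycEdge_zero i.isLt hij, cycEdge_zero i'.isLt hij'] at h1 h2
    rw [cycEdge_one hn i.isLt hij, cycEdge_one hn i'.isLt hij'] at h3
    have es : s.val = s'.val := by clear h3; omega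
    have em : min i.val (n - 1 - i.val) = min i'.val (n - 1 - i'.val) := by clear h3; omega
    have hi := i.isLt
    have hi' := i'.isLt
    have ei : i.val = i'.val := by
      rw [es] at h3
      clear h1 h2
      split_ifs at h3 <;> omega
    have ej : j.val = j'.val := by clear h1 h2 h3 em; have := j.isLt; have := j'.isLt; omega
    rw [Fin.ext es, Fin.ext ei, Fin.ext ej]
  · have hs := s.isLt
    clear h3
    omega
  · have hs' := s'.isLt
    clear h3
    omega
  · simp only [cycDist_zero, cycDist_one hn] at h1 h3
    have hi := i.isLt
    have hi' := i'.isLt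
    have em : min i.val (n - i.val) = min i'.val (n - i'.val) := by clear h3 h2; omega
    have ei : i.val = i'.val := by
      clear h1 h2
      split_ifs at h3 <;> omega
    rw [Fin.ext ei]

/-- `β_e(C_n □ P_2) = 3` for `n ≥ 3`. -/
theorem stmt_10 (n : ℕ) (hn : 3 ≤ n) :
    betaE ((cycleGraph n).boxProd (pathGraph 2)) = 3 := by
  have hmem : 3 ∈ {k | ∃ A : Finset (Fin n × Fin 2), A.card = k ∧
      IsEdgeResolvingSet ((cycleGraph n).boxProd (pathGraph 2)) ↑A} := by
    refine ⟨{(⟨0, by omega⟩, 0), (⟨0, by omega⟩, 1), (⟨1, by omega⟩, 0)}, ?_, ?_⟩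
    · rw [Finset.card_eq_three]
      exact ⟨_, _, _, by simp, by simp, by simp, rfl⟩
    · simpa using prism_resolving hn
  apply le_antisymm
  · exact Nat.sInf_le hmem
  · refine le_csInf ⟨3, hmem⟩ ?_
    rintro k ⟨A, rfl, hA⟩
    have : Nonempty (Fin n × Fin 2) := ⟨(⟨0, by omega⟩, 0)⟩
    exact three_le_card_of_resolving (prism_three_neighbors hn) hA
end

section
/- Every finite connected simple graph Γ has a vertex-edge dominating set of minimum cardinality γ_ve(Γ) that contains no pair of false twin vertices. -/
/-!
False twins ve-dominate the same edges (`VEDominates.of_twin`): if `u` is an end of the edge `uy`,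
then `y` is a neighbour of `u`, hence of its twin `v`. So deleting one of two false twins
from a vertex-edge dominating set leaves a vertex-edge dominating set, and therefore every minimum
one is free of false twins.
-/

open SimpleGraph

lemma VEDominates.of_twin {V : Type*} {G : SimpleGraph V} {u v : V}
    (h : G.neighborSet u = G.neighborSet v) {e : Sym2 V} (he : e ∈ G.edgeSet)
    (hu : VEDominates G u e) : VEDominates G v e := by
  have hadj : ∀ z, G.Adj u z → G.Adj v z := fun z hz => by
    have hz' : z ∈ G.neighborSet u := hz
    rwa [h] at hz'
  obtain ⟨x, y, rfl, hxy⟩ := hu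
  have hE : G.Adj x y := he
  refine ⟨x, y, rfl, ?_⟩
  rcases hxy with rfl | rfl | hx | hy
  · exact Or.inr (Or.inr (Or.inr (hadj _ hE)))
  · exact Or.inr (Or.inr (Or.inl (hadj _ hE.symm)))
  · exact Or.inr (Or.inr (Or.inl (hadj _ hx)))
  · exact Or.inr (Or.inr (Or.inr (hadj _ hy)))

/-- Every finite connected graph has a minimum vertex-edge dominating set with no false twins. -/
theorem stmt_13 {V : Type*} [Fintype V] (G : SimpleGraph V) (hG : G.Connected) :
    ∃ T : Finset V, T.card = gammaVe G ∧ IsVEDominatingSet G ↑T ∧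
      ∀ u ∈ T, ∀ v ∈ T, u ≠ v → G.neighborSet u ≠ G.neighborSet v := by
  classical
  -- The whole vertex set is vertex-edge dominating, so the infimum defining `gammaVe` is attained.
  have hne : {k | ∃ T : Finset V, T.card = k ∧ IsVEDominatingSet G ↑T}.Nonempty := by
    refine ⟨_, Finset.univ, rfl, fun e _ => ?_⟩
    induction e using Sym2.ind with
    | _ x y => exact ⟨x, by simp, x, y, rfl, Or.inl rfl⟩
  obtain ⟨T, hcard, hT⟩ := Nat.sInf_mem hne
  refine ⟨T, hcard, hT, fun u hu v hv huv htwin => ?_⟩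
  have herase : IsVEDominatingSet G ↑(T.erase v) := by
    intro e he
    obtain ⟨w, hw, hwe⟩ := hT e he
    by_cases hwv : w = v
    · subst hwv
      exact ⟨u, Finset.mem_erase.2 ⟨huv, hu⟩, hwe.of_twin htwin.symm he⟩
    · exact ⟨w, Finset.mem_erase.2 ⟨hwv, hw⟩, hwe⟩
  have hle : sInf {k | ∃ T : Finset V, T.card = k ∧ IsVEDominatingSet G ↑T} ≤ (T.erase v).card :=
    Nat.sInf_le ⟨_, rfl, herase⟩
  have hlt := Finset.card_erase_lt_of_mem hv
  omega
end

section
/- Let Γ be a finite connected simple graph of order n whose maximum degree equals n − 1. Then γ_emd(Γ) = n − 1 or γ_emd(Γ) = n − 2. -/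
/-!
Let `c` be a vertex of degree `n - 1`. For distinct vertices `x, y ≠ c`, every `w ∉ {c, x, y}` is at
distance `1` from both edges `cx` and `cy`, while `c` is at distance `0` from both; so a resolving
set contains `x` or `y`. Hence it misses at most one vertex other than `c`, which gives the lower
bound `n - 2` (`card_le_of_resolving`). Conversely, the complement of any single vertex `v` is
vertex-edge dominating and edge resolving: every edge has an endpoint other than `v`, and of two
distinct edges one has an endpoint, other than `v`, not on the other. This gives the upper bound
`n - 1`.
-/

open SimpleGraph

lemma edgeDist_eq_zero_iff_s17 {V : Type*} {G : SimpleGraph V} (hG : G.Connected) (w : V)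
    (e : Sym2 V) : edgeDist G w e = 0 ↔ w ∈ e := by
  induction e with
  | _ x y =>
    rw [edgeDist_mk, Nat.min_eq_zero_iff, hG.dist_eq_zero_iff, hG.dist_eq_zero_iff, Sym2.mem_iff]

/-- Edges at a dominating vertex `c` are at distance `1` from every vertex off them. -/
lemma edgeDist_hub {V : Type*} {G : SimpleGraph V} (hG : G.Connected) {c : V}
    (hc : ∀ x, x ≠ c → G.Adj c x) {w x : V} (hwc : w ≠ c) (hwx : w ≠ x) :
    edgeDist G w s(c, x) = 1 := by
  rw [edgeDist_mk, dist_eq_one_iff_adj.2 (hc w hwc).symm]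
  have := hG.pos_dist_of_ne hwx
  omega

/-- A resolving set misses at most one vertex other than the dominating vertex `c`. -/
lemma card_le_of_resolving {V : Type*} [Fintype V] {G : SimpleGraph V} (hG : G.Connected) {c : V}
    (hc : ∀ x, x ≠ c → G.Adj c x) {S : Finset V} (hS : IsEdgeResolvingSet G ↑S) :
    Fintype.card V ≤ S.card + 2 := by
  classical
  have h1 : ((insert c S)ᶜ).card ≤ 1 := by
    rw [Finset.card_le_one]
    intro x hx y hy
    simp only [Finset.mem_compl, Finset.mem_insert, not_or] at hx hy
    by_contra hxy
    obtain ⟨w, hw, hne⟩ := hS s(c, x) (hc x hx.1) s(c, y) (hc y hy.1)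
      (fun h => hxy (Sym2.congr_right.1 h))
    have hw' : w ∈ S := hw
    apply hne
    by_cases hwc : w = c
    · rw [(edgeDist_eq_zero_iff_s17 hG _ _).2 (by simp [hwc]),
        (edgeDist_eq_zero_iff_s17 hG _ _).2 (by simp [hwc])]
    · rw [edgeDist_hub hG hc hwc (by rintro rfl; exact hx.2 hw'),
        edgeDist_hub hG hc hwc (by rintro rfl; exact hy.2 hw')]
  have h2 := Finset.card_add_card_compl (insert c S)
  have h3 := Finset.card_insert_le c S
  omega

lemma isVEDominatingSet_compl_singleton {V : Type*} (G : SimpleGraph V) (v : V) :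
    IsVEDominatingSet G {v}ᶜ := by
  intro e he
  induction e with
  | _ x y =>
    have hxy : x ≠ y := G.ne_of_adj he
    by_cases hx : x = v
    · exact ⟨y, fun h => hxy (hx.trans h.symm), x, y, rfl, Or.inr (Or.inl rfl)⟩
    · exact ⟨x, hx, x, y, rfl, Or.inl rfl⟩

/-- Two edges with the same endpoints apart from `v` are equal, as each has two endpoints. -/
lemma isEdgeResolvingSet_compl_singleton {V : Type*} {G : SimpleGraph V} (hG : G.Connected)
    (v : V) : IsEdgeResolvingSet G {v}ᶜ := by
  intro e he f hf hne
  by_contra! hcon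
  have key : ∀ w, w ≠ v → (w ∈ e ↔ w ∈ f) := fun w hw => by
    rw [← edgeDist_eq_zero_iff_s17 hG, ← edgeDist_eq_zero_iff_s17 hG, hcon w hw]
  induction e with
  | _ a b =>
  induction f with
  | _ x y =>
    have hab : a ≠ b := G.ne_of_adj he
    have hxy : x ≠ y := G.ne_of_adj hf
    simp only [Sym2.mem_iff] at key
    simp only [ne_eq, Sym2.eq_iff] at hne
    have ha := key a
    have hb := key b
    have hx := key x
    have hy := key y
    clear key hcon he hf
    grind

/-- If `Δ(Γ) = n - 1` then `γ_emd(Γ) = n - 1` or `n - 2`. -/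
theorem stmt_17 {V : Type*} [Fintype V] (G : SimpleGraph V) [DecidableRel G.Adj]
    (hG : G.Connected) (hΔ : G.maxDegree = Fintype.card V - 1) :
    gammaEmd G = Fintype.card V - 1 ∨ gammaEmd G = Fintype.card V - 2 := by
  classical
  have := hG.nonempty
  obtain ⟨c, hcdeg⟩ := G.exists_maximal_degree_vertex
  have hc : ∀ x, x ≠ c → G.Adj c x := by
    have hsub : G.neighborFinset c ⊆ Finset.univ.erase c := fun x hx => by
      simpa using (G.ne_of_adj ((G.mem_neighborFinset c x).1 hx)).symm
    have heq := Finset.eq_of_subset_of_card_le hsub (by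
      rw [Finset.card_erase_of_mem (Finset.mem_univ c), Finset.card_univ,
        card_neighborFinset_eq_degree, ← hcdeg, hΔ])
    intro x hx
    rw [← G.mem_neighborFinset, heq]
    simpa using hx
  have hmem : Fintype.card V - 1 ∈ {k | ∃ S : Finset V, S.card = k ∧
      IsVEDominatingSet G ↑S ∧ IsEdgeResolvingSet G ↑S} := by
    refine ⟨{c}ᶜ, by simp [Finset.card_compl], ?_, ?_⟩
    · simpa using isVEDominatingSet_compl_singleton G c
    · simpa using isEdgeResolvingSet_compl_singleton hG c
  have hle : gammaEmd G ≤ Fintype.card V - 1 := Nat.sInf_le hmem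
  obtain ⟨S, hcard, -, hS⟩ := Nat.sInf_mem ⟨_, hmem⟩
  have hge := card_le_of_resolving hG hc hS
  change S.card = gammaEmd G at hcard
  omega
end
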